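/- arXiv:2402.08881 — 2 statements merged into one kernel-verified Lean document; each statement's English description precedes it below -/
import Mathlib

section
/- Let g: ℝ → ℝ be a smooth function such that |(g²)''(z)| = 2|(g'(z))² + g(z)g''(z)| < 1/4 for all z. Define u(x,y,z) := xy + g(z)² on ℝ³ and the smooth symmetric matrix A(z) with rows (1, −(g²)''(z)/2, 0), (−(g²)''(z)/2, 1, 0), (0, 0, 1). Then A(z) is uniformly elliptic, u satisfies div(A(z)∇u) = 0 in ℝ³, and the critical set satisfies C(u) = {(0,0,z) : g(z) = 0 or g'(z) = 0} while the singular set satisfies S(u) = {(0,0,z) : g(z) = 0}. -/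
/-!
Write `h = g²`, so that `u = xy + h(z)` has gradient `(y, x, h'(z))`, and let `a(z)` be the
off-diagonal entry of `A`. Then `A∇u = (y + a(z)x, a(z)y + x, h'(z))` has divergence `2a + h''`,
which vanishes for `a = -h''/2`. The matrix `A` has eigenvalues `1` and `1 ± a`, so it is uniformly
elliptic as soon as `|h''|` stays below a constant smaller than `2`. Finally `∇u = 0` exactly when
`x = y = 0` and `h'(z) = 2 g(z) g'(z) = 0`, and at such a point `u = g(z)²`.
-/

noncomputable section
open Set

/-- The function `u(x,y,z) = xy + g(z)²` on `ℝ³`. -/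
def simonU (g : ℝ → ℝ) (X : EuclideanSpace ℝ (Fin 3)) : ℝ :=
  X 0 * X 1 + g (X 2) ^ 2

/-- The coefficient matrix `A(z)` of Leon Simon's example. -/
def simonA (g : ℝ → ℝ) (z : ℝ) : Matrix (Fin 3) (Fin 3) ℝ :=
  !![1, -(deriv (deriv fun t => g t ^ 2) z) / 2, 0;
     -(deriv (deriv fun t => g t ^ 2) z) / 2, 1, 0;
     0, 0, 1]

/-- The second-order operator `div(A∇u)` on `ℝⁿ` with a variable coefficient matrix `A`, written in
coordinates. Values at points where `u` or the flux `A∇u` is not differentiable are junk. -/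
def divGrad {ι : Type*} [Fintype ι] [DecidableEq ι] (A : EuclideanSpace ℝ ι → Matrix ι ι ℝ)
    (u : EuclideanSpace ℝ ι → ℝ) (x : EuclideanSpace ℝ ι) : ℝ :=
  ∑ i, fderiv ℝ (fun y => ∑ j, A y i j * fderiv ℝ u y (EuclideanSpace.single j 1)) x
    (EuclideanSpace.single i 1)

/-- The function `xy + h(z)` on `ℝ³`: a saddle plus a perturbation in the remaining variable. -/
def saddleAdd (h : ℝ → ℝ) (x : EuclideanSpace ℝ (Fin 3)) : ℝ :=
  x 0 * x 1 + h (x 2)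

/-- The perturbation of the identity matrix that couples the first two coordinates by `a`. -/
def couplingMatrix (a : ℝ) : Matrix (Fin 3) (Fin 3) ℝ :=
  !![1, a, 0; a, 1, 0; 0, 0, 1]

theorem simonU_eq_saddleAdd (g : ℝ → ℝ) : simonU g = saddleAdd fun t => g t ^ 2 :=
  rfl

theorem simonA_eq_couplingMatrix (g : ℝ → ℝ) (z : ℝ) :
    simonA g z = couplingMatrix (-(deriv (deriv fun t => g t ^ 2) z) / 2) :=
  rfl

theorem deriv_sq {𝕜 : Type*} [NontriviallyNormedField 𝕜] {g : 𝕜 → 𝕜} {z : 𝕜}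
    (hg : DifferentiableAt 𝕜 g z) : deriv (fun t => g t ^ 2) z = 2 * g z * deriv g z := by
  simpa using deriv_fun_pow hg 2

theorem deriv_deriv_sq {𝕜 : Type*} [NontriviallyNormedField 𝕜] {g : 𝕜 → 𝕜} {z : 𝕜}
    (hg : Differentiable 𝕜 g) (hg' : DifferentiableAt 𝕜 (deriv g) z) :
    deriv (deriv fun t => g t ^ 2) z = 2 * (deriv g z ^ 2 + g z * deriv (deriv g) z) := by
  have hsq : (deriv fun t => g t ^ 2) = fun t => 2 * g t * deriv g t :=
    funext fun t => deriv_sq (hg t)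
  rw [hsq, (((hg z).hasDerivAt.const_mul 2).fun_mul hg'.hasDerivAt).deriv]
  ring

theorem contDiff_deriv_deriv {𝕜 F : Type*} [NontriviallyNormedField 𝕜] [NormedAddCommGroup F]
    [NormedSpace 𝕜 F] {f : 𝕜 → F} {n : WithTop ℕ∞} (hf : ContDiff 𝕜 (n + 2) f) :
    ContDiff 𝕜 n (deriv (deriv f)) := by
  rw [← one_add_one_eq_two, ← add_assoc] at hf
  exact hf.deriv'.deriv'

theorem hasFDerivAt_comp_coord {𝕜 ι : Type*} [NontriviallyNormedField 𝕜] [Finite ι]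
    (p : ENNReal) [Fact (1 ≤ p)] {f : 𝕜 → 𝕜} {f' : 𝕜} (i : ι) {x : PiLp p fun _ : ι => 𝕜}
    (hf : HasDerivAt f f' (x i)) :
    HasFDerivAt (fun y : PiLp p fun _ : ι => 𝕜 => f (y i))
      (f' • (PiLp.proj p (fun _ => 𝕜) i : (PiLp p fun _ : ι => 𝕜) →L[𝕜] 𝕜)) x :=
  have := Fintype.ofFinite ι
  hf.comp_hasFDerivAt x (PiLp.hasFDerivAt_apply p x i)

theorem fderiv_single_eq_gradient {ι : Type*} [Fintype ι] [DecidableEq ι]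
    (f : EuclideanSpace ℝ ι → ℝ) (x : EuclideanSpace ℝ ι) (i : ι) :
    fderiv ℝ f x (EuclideanSpace.single i 1) = gradient f x i := by
  rw [← inner_gradient_left, EuclideanSpace.inner_single_right]
  simp

theorem isSymm_couplingMatrix (a : ℝ) : (couplingMatrix a).IsSymm := by
  ext i j
  fin_cases i <;> fin_cases j <;> rfl

theorem contDiff_couplingMatrix_apply {E : Type*} [NormedAddCommGroup E] [NormedSpace ℝ E]
    {n : WithTop ℕ∞} {a : E → ℝ} (ha : ContDiff ℝ n a) (i j : Fin 3) :
    ContDiff ℝ n fun x => couplingMatrix (a x) i j := by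
  fin_cases i <;> fin_cases j <;> first | exact ha | exact contDiff_const

theorem one_sub_abs_mul_sum_sq_le_couplingMatrix (a : ℝ) (v : Fin 3 → ℝ) :
    (1 - |a|) * ∑ i, v i ^ 2 ≤ ∑ i, ∑ j, couplingMatrix a i j * v i * v j := by
  have hform : ∑ i, ∑ j, couplingMatrix a i j * v i * v j =
      ∑ i, v i ^ 2 + a * (2 * v 0 * v 1) := by
    simp only [couplingMatrix, Fin.sum_univ_three, Matrix.of_apply, Matrix.cons_val]
    ring
  have hcross : -(|a| * ∑ i, v i ^ 2) ≤ a * (2 * v 0 * v 1) := by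
    refine neg_le_of_abs_le ?_
    rw [abs_mul]
    gcongr
    rw [Fin.sum_univ_three, abs_le]
    constructor <;> nlinarith [sq_nonneg (v 0 + v 1), sq_nonneg (v 0 - v 1), sq_nonneg (v 2)]
  linarith

section SaddleAdd

variable {h : ℝ → ℝ} {x : EuclideanSpace ℝ (Fin 3)}

theorem hasGradientAt_saddleAdd {h' : ℝ} (hh : HasDerivAt h h' (x 2)) :
    HasGradientAt (saddleAdd h) !₂[x 1, x 0, h'] x := by
  have hcoord := PiLp.hasFDerivAt_apply (𝕜 := ℝ) 2 x
  refine (((hcoord 0).fun_mul (hcoord 1)).fun_add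
    (hasFDerivAt_comp_coord 2 2 hh)).congr_fderiv (ContinuousLinearMap.ext fun v => ?_)
  have hinner : inner ℝ !₂[x 1, x 0, h'] v = x 1 * v 0 + x 0 * v 1 + h' * v 2 := by
    simp [PiLp.inner_apply, Fin.sum_univ_three, mul_comm]
  rw [InnerProductSpace.toDual_apply_apply, hinner, add_comm (x 1 * v 0)]
  rfl

theorem gradient_saddleAdd_eq_zero_iff (hh : DifferentiableAt ℝ h (x 2)) :
    gradient (saddleAdd h) x = 0 ↔ x 0 = 0 ∧ x 1 = 0 ∧ deriv h (x 2) = 0 := by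
  rw [(hasGradientAt_saddleAdd hh.hasDerivAt).gradient, PiLp.ext_iff]
  simp [Fin.forall_fin_succ, and_left_comm]

theorem couplingMatrix_flux_saddleAdd (hh : DifferentiableAt ℝ h (x 2)) (a : ℝ) (i : Fin 3) :
    ∑ j, couplingMatrix a i j * fderiv ℝ (saddleAdd h) x (EuclideanSpace.single j 1) =
      ![x 1 + a * x 0, a * x 1 + x 0, deriv h (x 2)] i := by
  simp only [fderiv_single_eq_gradient, (hasGradientAt_saddleAdd hh.hasDerivAt).gradient]
  fin_cases i <;> simp [couplingMatrix, Fin.sum_univ_three]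

theorem divGrad_couplingMatrix_saddleAdd {a : ℝ → ℝ} (ha : DifferentiableAt ℝ a (x 2))
    (hh : Differentiable ℝ h) (hh' : DifferentiableAt ℝ (deriv h) (x 2)) :
    divGrad (fun y => couplingMatrix (a (y 2))) (saddleAdd h) x =
      2 * a (x 2) + deriv (deriv h) (x 2) := by
  have hcoord := PiLp.hasFDerivAt_apply (𝕜 := ℝ) 2 x
  have hcoeff := hasFDerivAt_comp_coord 2 2 ha.hasDerivAt
  have hpartial₀ : fderiv ℝ (fun y : EuclideanSpace ℝ (Fin 3) => y 1 + a (y 2) * y 0) x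
      (EuclideanSpace.single 0 1) = a (x 2) := by
    rw [((hcoord 1).fun_add (hcoeff.fun_mul (hcoord 0))).fderiv]
    simp
  have hpartial₁ : fderiv ℝ (fun y : EuclideanSpace ℝ (Fin 3) => a (y 2) * y 1 + y 0) x
      (EuclideanSpace.single 1 1) = a (x 2) := by
    rw [((hcoeff.fun_mul (hcoord 1)).fun_add (hcoord 0)).fderiv]
    simp
  have hpartial₂ : fderiv ℝ (fun y : EuclideanSpace ℝ (Fin 3) => deriv h (y 2)) x
      (EuclideanSpace.single 2 1) = deriv (deriv h) (x 2) := by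
    rw [(hasFDerivAt_comp_coord 2 2 hh'.hasDerivAt).fderiv]
    simp
  simp only [divGrad, couplingMatrix_flux_saddleAdd (hh _), Fin.sum_univ_three, Matrix.cons_val,
    hpartial₀, hpartial₁, hpartial₂]
  ring

end SaddleAdd

theorem gradient_simonU_eq_zero_iff {g : ℝ → ℝ} {x : EuclideanSpace ℝ (Fin 3)}
    (hg : DifferentiableAt ℝ g (x 2)) :
    gradient (simonU g) x = 0 ↔ x 0 = 0 ∧ x 1 = 0 ∧ (g (x 2) = 0 ∨ deriv g (x 2) = 0) := by
  rw [simonU_eq_saddleAdd, gradient_saddleAdd_eq_zero_iff (hg.fun_pow 2), deriv_sq hg]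
  simp

theorem simonU_eq_zero_and_gradient_eq_zero_iff {g : ℝ → ℝ} {x : EuclideanSpace ℝ (Fin 3)}
    (hg : DifferentiableAt ℝ g (x 2)) :
    simonU g x = 0 ∧ gradient (simonU g) x = 0 ↔ x 0 = 0 ∧ x 1 = 0 ∧ g (x 2) = 0 := by
  rw [gradient_simonU_eq_zero_iff hg]
  constructor
  · rintro ⟨hu, hx₀, hx₁, -⟩
    exact ⟨hx₀, hx₁, by simpa [simonU, hx₀] using hu⟩
  · rintro ⟨hx₀, hx₁, hgx⟩
    exact ⟨by simp [simonU, hx₀, hgx], hx₀, hx₁, Or.inl hgx⟩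

theorem divGrad_simonA_simonU {g : ℝ → ℝ} (hg : ContDiff ℝ 3 g) (x : EuclideanSpace ℝ (Fin 3)) :
    divGrad (fun y => simonA g (y 2)) (simonU g) x = 0 := by
  have hh : ContDiff ℝ (1 + 2) fun t => g t ^ 2 :=
    (hg.pow 2).of_le (by norm_num)
  have hh' : Differentiable ℝ (deriv fun t => g t ^ 2) :=
    (hh.of_le (by norm_num)).differentiable_deriv_two
  have ha : Differentiable ℝ fun z => -(deriv (deriv fun t => g t ^ 2) z) / 2 :=
    ((contDiff_deriv_deriv hh).neg.div_const 2).differentiable one_ne_zero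
  simp only [simonA_eq_couplingMatrix, simonU_eq_saddleAdd]
  rw [divGrad_couplingMatrix_saddleAdd (ha _) (hh.differentiable (by norm_num)) (hh' _)]
  ring

theorem exists_pos_mul_sum_sq_le_simonA {g : ℝ → ℝ} {b : ℝ} (hb : b < 2)
    (hg : ∀ z, |deriv (deriv fun t => g t ^ 2) z| ≤ b) :
    ∃ c : ℝ, 0 < c ∧ ∀ (z : ℝ) (v : Fin 3 → ℝ),
      c * ∑ i, v i ^ 2 ≤ ∑ i, ∑ j, simonA g z i j * v i * v j := by
  refine ⟨1 - b / 2, by linarith, fun z v => ?_⟩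
  refine le_trans ?_ (one_sub_abs_mul_sum_sq_le_couplingMatrix _ v)
  rw [abs_div, abs_neg, abs_two]
  gcongr
  exact hg z

theorem simon_example_general {g : ℝ → ℝ} {n : WithTop ℕ∞} {b : ℝ} (hn : n ≠ 0)
    (hg : ContDiff ℝ (n + 2) g) (hb : b < 2)
    (hsmall : ∀ z : ℝ, 2 * |(deriv g z) ^ 2 + g z * deriv (deriv g) z| < b) :
    (∀ z : ℝ, |deriv (deriv fun t => g t ^ 2) z| =
        2 * |(deriv g z) ^ 2 + g z * deriv (deriv g) z| ∧
      |deriv (deriv fun t => g t ^ 2) z| < b) ∧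
    (∀ i j : Fin 3, ContDiff ℝ n fun z => simonA g z i j) ∧
    (∀ z : ℝ, (simonA g z).IsSymm) ∧
    (∃ c : ℝ, 0 < c ∧ ∀ (z : ℝ) (v : Fin 3 → ℝ),
      c * ∑ i, v i ^ 2 ≤ ∑ i, ∑ j, simonA g z i j * v i * v j) ∧
    (∀ x : EuclideanSpace ℝ (Fin 3),
      ∑ i : Fin 3,
        fderiv ℝ
          (fun y : EuclideanSpace ℝ (Fin 3) =>
            ∑ j : Fin 3, simonA g (y 2) i j * fderiv ℝ (simonU g) y (EuclideanSpace.single j 1))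
          x (EuclideanSpace.single i 1) = 0) ∧
    {x : EuclideanSpace ℝ (Fin 3) | gradient (simonU g) x = 0} =
      {x : EuclideanSpace ℝ (Fin 3) |
        x 0 = 0 ∧ x 1 = 0 ∧ (g (x 2) = 0 ∨ deriv g (x 2) = 0)} ∧
    {x : EuclideanSpace ℝ (Fin 3) | simonU g x = 0 ∧ gradient (simonU g) x = 0} =
      {x : EuclideanSpace ℝ (Fin 3) | x 0 = 0 ∧ x 1 = 0 ∧ g (x 2) = 0} := by
  have hdiff : Differentiable ℝ g := hg.differentiable (by simp)
  have hdiff' : Differentiable ℝ (deriv g) :=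
    (hg.of_le le_add_self).differentiable_deriv_two
  have hsq (z : ℝ) : |deriv (deriv fun t => g t ^ 2) z| =
      2 * |(deriv g z) ^ 2 + g z * deriv (deriv g) z| := by
    rw [deriv_deriv_sq hdiff (hdiff' z), abs_mul, abs_two]
  have hbound (z : ℝ) : |deriv (deriv fun t => g t ^ 2) z| < b :=
    (hsq z).trans_lt (hsmall z)
  have hsmooth : ContDiff ℝ n fun z => -(deriv (deriv fun t => g t ^ 2) z) / 2 :=
    (contDiff_deriv_deriv (hg.pow 2)).neg.div_const 2
  have hg₃ : ContDiff ℝ 3 g := hg.of_le <| calc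
    (3 : WithTop ℕ∞) = 1 + 2 := by norm_num
    _ ≤ n + 2 := by gcongr; exact ENat.one_le_iff_ne_zero_withTop.mpr hn
  exact ⟨fun z => ⟨hsq z, hbound z⟩, contDiff_couplingMatrix_apply hsmooth,
    fun z => isSymm_couplingMatrix _,
    exists_pos_mul_sum_sq_le_simonA hb fun z => (hbound z).le,
    divGrad_simonA_simonU hg₃,
    ext fun x => gradient_simonU_eq_zero_iff (hdiff _),
    ext fun x => simonU_eq_zero_and_gradient_eq_zero_iff (hdiff _)⟩

/-- Leon Simon's example: if `g : ℝ → ℝ` is smooth with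
`|(g²)''| = 2|(g')² + g g''| < 1/4`, then for `u(x,y,z) = xy + g(z)²` the matrix `A(z)` is
smooth, symmetric and uniformly elliptic, `div(A(z)∇u) = 0` on `ℝ³`, and
`𝒞(u) = {(0,0,z) : g(z) = 0 or g'(z) = 0}` while `𝒮(u) = {(0,0,z) : g(z) = 0}`. -/
theorem simon_example (g : ℝ → ℝ) (hg : ContDiff ℝ (⊤ : ℕ∞) g)
    (hsmall : ∀ z : ℝ, 2 * |(deriv g z) ^ 2 + g z * deriv (deriv g) z| < 1 / 4) :
    (∀ z : ℝ, |deriv (deriv fun t => g t ^ 2) z| =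
        2 * |(deriv g z) ^ 2 + g z * deriv (deriv g) z| ∧
      |deriv (deriv fun t => g t ^ 2) z| < 1 / 4) ∧
    (∀ i j : Fin 3, ContDiff ℝ (⊤ : ℕ∞) fun z => simonA g z i j) ∧
    (∀ z : ℝ, (simonA g z).IsSymm) ∧
    (∃ c : ℝ, 0 < c ∧ ∀ (z : ℝ) (v : Fin 3 → ℝ),
      c * ∑ i, v i ^ 2 ≤ ∑ i, ∑ j, simonA g z i j * v i * v j) ∧
    (∀ x : EuclideanSpace ℝ (Fin 3),
      ∑ i : Fin 3,
        fderiv ℝ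
          (fun y : EuclideanSpace ℝ (Fin 3) =>
            ∑ j : Fin 3, simonA g (y 2) i j * fderiv ℝ (simonU g) y (EuclideanSpace.single j 1))
          x (EuclideanSpace.single i 1) = 0) ∧
    {x : EuclideanSpace ℝ (Fin 3) | gradient (simonU g) x = 0} =
      {x : EuclideanSpace ℝ (Fin 3) |
        x 0 = 0 ∧ x 1 = 0 ∧ (g (x 2) = 0 ∨ deriv g (x 2) = 0)} ∧
    {x : EuclideanSpace ℝ (Fin 3) | simonU g x = 0 ∧ gradient (simonU g) x = 0} =
      {x : EuclideanSpace ℝ (Fin 3) | x 0 = 0 ∧ x 1 = 0 ∧ g (x 2) = 0} :=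
  simon_example_general (by simp) hg (by norm_num) hsmall
end
end

section
/- Let u be a nonconstant harmonic function in B_3(0) ⊂ ℝ^d with normalized frequency N(0,3) ≤ Λ. Let 0 < r < 1 and X₁, X₂ ∈ B_1(0) with |X₁ − X₂| ≤ r/2, and assume W(X₁,r) and W(X₂,r) are small, where W(X, r) := N(X, 3r/2) − N(X, r/2). If in addition X₁ is a critical point of u (∇u(X₁) = 0), then |u(X₁) − u(X₂)| ≤ C (W(X₁,r)^{1/2} + W(X₂,r)^{1/2}) · (|B_r|^{−1} ∬_{B_r(X₁)} |u − u(X₁)|² dZ)^{1/2}, with C depending only on d and Λ. -/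
/-!
Put `v = u (X₂ + ·) - u X₂` and `a = X₁ - X₂`, so that `v 0 = 0` and `∇ v a = 0`; only the
pinching `W` of the frequency about `X₂` enters. Let `E v = x · ∇ v` be the Euler derivative and
`M` the mean of `v ^ 2` over the sphere of radius `s` about the origin.

* Almgren's formula expresses the derivative of the frequency `N` through the mean square of the
  defect `E v - N v`. Hence for some `s` between `3 r / 5` and `4 r / 5` the mean square of the
  defect on the sphere of radius `s` is at most a constant times `W M`.
* `E v - N v` is harmonic and equals `-N v(a)` at the critical point `a`, so interior estimates
  bound `N² v(a)²` by a constant times `W M`. Since `v 0 = 0`, a gap in the possible degrees of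
  homogeneity keeps `N` above `1 / 2` when `W` is small. Therefore `v(a)² ≤ C W M`.
* It remains to bound `M` by the average of `(v - v(a))²` over `B_r(a)` plus a multiple of
  `v(a)²`, which is absorbed for small `W`. The ball `B_r(a)` comfortably contains the half of the
  sphere facing `a`, but not all of it. The other half is reached by symmetry: let `k` be an
  integer nearest to `N`. The part of `v` whose parity is opposite to that of `k` has no component
  of homogeneity `k`, so by a spectral gap its mean square is bounded by that of the defect. Thus
  `v(-y)` is `(-1)^k v(y)` up to a small error, and the half sphere facing `a` controls all of
  `M`.

The constants depend on the dimension only.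
-/

noncomputable section
open Metric Set MeasureTheory
open scoped ENNReal RealInnerProductSpace

abbrev ES (n : ℕ) := EuclideanSpace ℝ (Fin n)

/-- `u` is harmonic on `s`: twice continuously differentiable with vanishing Laplacian. -/
def IsHarmonicOn {n : ℕ} (u : ES n → ℝ) (s : Set (ES n)) : Prop :=
  ContDiffOn ℝ 2 u s ∧
    ∀ x ∈ s,
      (∑ i : Fin n, iteratedFDerivWithin ℝ 2 u s x fun _ => EuclideanSpace.single i 1) = 0

/-- The interior Dirichlet energy `D(p,r) = ∬_{B_r(p)} |∇u|²`. -/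
def iD {n : ℕ} (u : ES n → ℝ) (p : ES n) (r : ℝ) : ℝ :=
  ∫ x in ball p r, ‖gradient u x‖ ^ 2

/-- The interior normalized boundary term `H(p,r) = ∫_{∂B_r(p)} |u - u(p)|² dH^{n-1}`. -/
def iH {n : ℕ} (u : ES n → ℝ) (p : ES n) (r : ℝ) : ℝ :=
  ∫ x in sphere p r, (u x - u p) ^ 2 ∂μH[(n : ℝ) - 1]

/-- The interior normalized frequency function `N(p,r) = r D(p,r) / H(p,r)`. -/
def iN {n : ℕ} (u : ES n → ℝ) (p : ES n) (r : ℝ) : ℝ :=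
  r * iD u p r / iH u p r

/-- The frequency pinching `W(p,r) = N(p, 3r/2) - N(p, r/2)`. -/
def iW {n : ℕ} (u : ES n → ℝ) (p : ES n) (r : ℝ) : ℝ :=
  iN u p (3 * r / 2) - iN u p (r / 2)

/-- Radial derivative of `u` with vertex `p`. -/
def radialDeriv {n : ℕ} (u : ES n → ℝ) (p x : ES n) : ℝ :=
  ⟪gradient u x, ‖x - p‖⁻¹ • (x - p)⟫

open Filter Topology
open Module (finrank)
open scoped ContDiff Gradient Laplacian Pointwise

section UniformlyDistributed

variable {X : Type*} [PseudoMetricSpace X] [MeasurableSpace X]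

/-- A measure on a metric space is uniformly distributed if balls of equal radius have equal
mass. -/
def IsUniformlyDistributed (μ : Measure X) : Prop :=
  ∀ x y r, μ (ball x r) = μ (ball y r)

variable [SecondCountableTopology X] {μ ν : Measure X}

lemma IsUniformlyDistributed.measure_ball_ne_zero (hμ : IsUniformlyDistributed μ) (hμ0 : μ ≠ 0)
    (x : X) {r : ℝ} (hr : 0 < r) : μ (ball x r) ≠ 0 := fun h =>
  hμ0 <| Measure.measure_univ_eq_zero.1 <| measure_null_of_locally_null _ fun y _ =>
    ⟨ball y r, mem_nhdsWithin_of_mem_nhds (ball_mem_nhds y hr), (hμ y x r).trans h⟩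

variable [BorelSpace X]

lemma IsUniformlyDistributed.prod_dist_lt [SFinite ν] (hν : IsUniformlyDistributed ν) (x : X)
    (r : ℝ) {A : Set X} (hA : MeasurableSet A) :
    μ.prod ν {p | p.1 ∈ A ∧ dist p.1 p.2 < r} = ν (ball x r) * μ A := by
  have hmeas : MeasurableSet {p : X × X | p.1 ∈ A ∧ dist p.1 p.2 < r} :=
    (measurable_fst hA).inter (measurableSet_lt measurable_dist measurable_const)
  have hslice (y : X) : ν (Prod.mk y ⁻¹' {p : X × X | p.1 ∈ A ∧ dist p.1 p.2 < r}) =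
      A.indicator (fun _ => ν (ball x r)) y := by
    by_cases hy : y ∈ A
    · rw [indicator_of_mem hy, hν x y r]
      simp [hy, ball, dist_comm]
    · simp [hy]
  rw [Measure.prod_apply hmeas, lintegral_congr hslice, lintegral_indicator_const hA]

variable [IsFiniteMeasure μ] [IsFiniteMeasure ν]

lemma IsUniformlyDistributed.measure_mul_univ_le_of_thickening_subset
    (hμ : IsUniformlyDistributed μ) (hν : IsUniformlyDistributed ν) {A B : Set X}
    (hA : MeasurableSet A) (hB : MeasurableSet B) {r : ℝ} (hr : 0 < r) (hAB : thickening r A ⊆ B) :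
    μ A * ν univ ≤ μ univ * ν B := by
  rcases eq_or_ne ν 0 with rfl | hν0
  · simp
  rcases isEmpty_or_nonempty X with hX | ⟨⟨x⟩⟩
  · simp [Measure.eq_zero_of_isEmpty μ]
  have hswap {B : Set X} (hB : MeasurableSet B) :
      μ.prod ν {p | p.2 ∈ B ∧ dist p.1 p.2 < r} = μ (ball x r) * ν B := by
    have hmeas : MeasurableSet {p : X × X | p.2 ∈ B ∧ dist p.1 p.2 < r} :=
      (measurable_snd hB).inter (measurableSet_lt measurable_dist measurable_const)
    rw [← hμ.prod_dist_lt x r hB, ← Measure.prod_swap, Measure.map_apply measurable_swap hmeas]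
    simp [dist_comm]
  have huniv : ν (ball x r) * μ univ = μ (ball x r) * ν univ := by
    simpa using (hν.prod_dist_lt (μ := μ) x r .univ).symm.trans
      (by simpa using hswap .univ)
  have hle : ν (ball x r) * μ A ≤ μ (ball x r) * ν B := by
    rw [← hν.prod_dist_lt x r hA, ← hswap hB]
    exact measure_mono fun p hp =>
      ⟨hAB (mem_thickening_iff.2 ⟨p.1, hp.1, by simpa [dist_comm] using hp.2⟩), hp.2⟩
  refine (ENNReal.mul_le_mul_iff_right (hν.measure_ball_ne_zero hν0 x hr) (by finiteness)).1 ?_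
  calc ν (ball x r) * (μ A * ν univ) = ν (ball x r) * μ A * ν univ := by ring
    _ ≤ μ (ball x r) * ν B * ν univ := by gcongr
    _ = ν (ball x r) * (μ univ * ν B) := by
        rw [← mul_assoc, huniv]; ring

lemma IsUniformlyDistributed.measure_mul_univ_le_of_isClosed
    (hμ : IsUniformlyDistributed μ) (hν : IsUniformlyDistributed ν) {F : Set X}
    (hF : IsClosed F) : μ F * ν univ ≤ μ univ * ν F := by
  have hlim : Tendsto (fun r => μ univ * ν (thickening r F)) (𝓝[>] 0) (𝓝 (μ univ * ν F)) :=
    ENNReal.Tendsto.const_mul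
      (tendsto_measure_thickening_of_isClosed ⟨1, one_pos, measure_ne_top ν _⟩ hF)
      (.inr (measure_ne_top μ _))
  refine ge_of_tendsto hlim ?_
  filter_upwards [self_mem_nhdsWithin] with r hr
  exact hμ.measure_mul_univ_le_of_thickening_subset hν hF.measurableSet
    isOpen_thickening.measurableSet hr subset_rfl

theorem IsUniformlyDistributed.smul_eq_smul
    (hμ : IsUniformlyDistributed μ) (hν : IsUniformlyDistributed ν) :
    ν univ • μ = μ univ • ν := by
  have := μ.smul_finite (measure_ne_top ν univ)
  refine ext_of_generate_finite _ (BorelSpace.measurable_eq.trans borel_eq_generateFrom_isClosed)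
    isPiSystem_isClosed (fun F hF => ?_) (by simp [mul_comm])
  refine le_antisymm ?_ ?_
  · simpa [mul_comm] using hμ.measure_mul_univ_le_of_isClosed hν hF
  · simpa [mul_comm] using hν.measure_mul_univ_le_of_isClosed hμ hF

end UniformlyDistributed

variable {E : Type*} [NormedAddCommGroup E] [InnerProductSpace ℝ E]

section UnitSphere

/-- The isometry of the unit sphere induced by a linear isometry of the ambient space. -/
def unitSphereIsometry (R : E ≃ₗᵢ[ℝ] E) : sphere (0 : E) 1 ≃ᵢ sphere (0 : E) 1 where
  toEquiv := R.toEquiv.subtypeEquiv fun x => by simp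
  isometry_toFun x y := by simp [Subtype.edist_eq, Equiv.subtypeEquiv]

@[simp]
lemma coe_unitSphereIsometry (R : E ≃ₗᵢ[ℝ] E) (w : sphere (0 : E) 1) :
    (unitSphereIsometry R w : E) = R w := rfl

variable [MeasurableSpace E] [BorelSpace E]

lemma isUniformlyDistributed_of_map_unitSphereIsometry {μ : Measure (sphere (0 : E) 1)}
    (hμ : ∀ R : E ≃ₗᵢ[ℝ] E, μ.map (unitSphereIsometry R) = μ) : IsUniformlyDistributed μ := by
  intro x y r
  set R := (ℝ ∙ (x - y : E))ᗮ.reflection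
  have hxy : unitSphereIsometry R x = y := Subtype.ext (Submodule.reflection_sub (by simp))
  nth_rw 2 [← hμ R]
  rw [Measure.map_apply (unitSphereIsometry R).continuous.measurable measurableSet_ball, ← hxy,
    IsometryEquiv.preimage_ball, IsometryEquiv.symm_apply_apply]

variable [FiniteDimensional ℝ E]

lemma toSphere_map_unitSphereIsometry (R : E ≃ₗᵢ[ℝ] E) :
    (volume : Measure E).toSphere.map (unitSphereIsometry R) = (volume : Measure E).toSphere := by
  ext B hB
  have hR := (unitSphereIsometry R).continuous.measurable
  have himage : (Subtype.val '' B : Set E) =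
      R '' (Subtype.val '' (unitSphereIsometry R ⁻¹' B)) := by
    rw [← image_comp, show R ∘ Subtype.val = Subtype.val ∘ unitSphereIsometry R from rfl,
      image_comp, (unitSphereIsometry R).surjective.image_preimage]
  have hcone (T : Set E) : volume (Ioo (0 : ℝ) 1 • R '' T) = volume (Ioo (0 : ℝ) 1 • T) := by
    rw [show Ioo (0 : ℝ) 1 • R '' T = R '' (Ioo (0 : ℝ) 1 • T) by
      simp only [← image2_smul, image_image2, image2_image_right, map_smul],
      R.image_eq_preimage_symm]
    exact R.symm.measurePreserving.measure_preimage_equiv (f := R.symm.toMeasurableEquiv) _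
  rw [Measure.map_apply hR hB, Measure.toSphere_apply' _ (hR hB), Measure.toSphere_apply' _ hB,
    himage, hcone]

variable (E) in
/-- The rotation invariant probability measure on the unit sphere. -/
def uniformOnSphere : Measure (sphere (0 : E) 1) :=
  ((volume : Measure E).toSphere univ)⁻¹ • (volume : Measure E).toSphere

lemma uniformOnSphere_map_unitSphereIsometry (R : E ≃ₗᵢ[ℝ] E) :
    (uniformOnSphere E).map (unitSphereIsometry R) = uniformOnSphere E := by
  rw [uniformOnSphere, Measure.map_smul, toSphere_map_unitSphereIsometry]

instance [Nontrivial E] : IsProbabilityMeasure (uniformOnSphere E) where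
  measure_univ := ENNReal.inv_mul_cancel
    (Measure.measure_univ_ne_zero.2 (Measure.toSphere_ne_zero _)) (by finiteness)

lemma toSphere_eq_smul_uniformOnSphere [Nontrivial E] :
    (volume : Measure E).toSphere = (volume : Measure E).toSphere univ • uniformOnSphere E := by
  rw [uniformOnSphere, smul_smul, ENNReal.mul_inv_cancel
    (Measure.measure_univ_ne_zero.2 (Measure.toSphere_ne_zero _)) (by finiteness), one_smul]

end UnitSphere

section SphereMean

variable [FiniteDimensional ℝ E] [MeasurableSpace E] [BorelSpace E]

/-- The mean of `f` over the sphere of radius `s` centred at the origin. -/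
def sphereMean (f : E → ℝ) (s : ℝ) : ℝ :=
  ∫ w, f (s • (w : E)) ∂uniformOnSphere E

lemma sphereMean_const_mul (c : ℝ) (f : E → ℝ) (s : ℝ) :
    sphereMean (fun x => c * f x) s = c * sphereMean f s :=
  integral_const_mul _ _

lemma sphereMean_nonneg {f : E → ℝ} (hf : 0 ≤ f) (s : ℝ) : 0 ≤ sphereMean f s :=
  integral_nonneg fun _ => hf _

lemma sphereMean_comp_linearIsometryEquiv (f : E → ℝ) (R : E ≃ₗᵢ[ℝ] E) (s : ℝ) :
    sphereMean (f ∘ R) s = sphereMean f s := by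
  have hR := (unitSphereIsometry R).toHomeomorph.measurableEmbedding
  rw [sphereMean, sphereMean, ← uniformOnSphere_map_unitSphereIsometry R]
  refine Eq.trans ?_ (hR.integral_map _).symm
  simp [uniformOnSphere_map_unitSphereIsometry]

variable [Nontrivial E]

@[simp]
lemma sphereMean_const (c s : ℝ) : sphereMean (fun _ : E => c) s = c := by
  simp [sphereMean]

@[simp]
lemma sphereMean_zero_right (f : E → ℝ) : sphereMean f 0 = f 0 := by
  simp [sphereMean]

lemma integrable_smul_sphere {f : E → ℝ} (hf : Continuous f) (s : ℝ) :
    Integrable (fun w : sphere (0 : E) 1 => f (s • (w : E))) (uniformOnSphere E) :=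
  (hf.comp (by fun_prop)).integrable_of_hasCompactSupport (.of_compactSpace _)

lemma sphereMean_add {f g : E → ℝ} (hf : Continuous f) (hg : Continuous g) (s : ℝ) :
    sphereMean (fun x => f x + g x) s = sphereMean f s + sphereMean g s :=
  integral_add (integrable_smul_sphere hf s) (integrable_smul_sphere hg s)

lemma sphereMean_sum {ι : Type*} [Fintype ι] {F : ι → E → ℝ} (hF : ∀ i, Continuous (F i)) (s : ℝ) :
    sphereMean (fun x => ∑ i, F i x) s = ∑ i, sphereMean (F i) s :=
  integral_finsetSum _ fun i _ => integrable_smul_sphere (hF i) s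

lemma sphereMean_mono {f g : E → ℝ} (hf : Continuous f) (hg : Continuous g) {s : ℝ}
    (hfg : ∀ x, ‖x‖ = |s| → f x ≤ g x) : sphereMean f s ≤ sphereMean g s :=
  integral_mono (integrable_smul_sphere hf s) (integrable_smul_sphere hg s) fun w =>
    hfg _ (by simp [norm_smul])

lemma continuous_sphereMean {f : E → ℝ} (hf : Continuous f) : Continuous (sphereMean f) := by
  unfold sphereMean
  simp_rw [← setIntegral_univ (μ := uniformOnSphere E)]
  exact continuous_parametric_integral_of_continuous
    (f := fun (s : ℝ) (w : sphere (0 : E) 1) => f (s • (w : E))) (hf.comp (by fun_prop))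
    isCompact_univ

/-- The Euler operator `f ↦ x · ∇f`. -/
def eulerDeriv (f : E → ℝ) (x : E) : ℝ :=
  fderiv ℝ f x x

lemma hasDerivAt_sphereMean {f : E → ℝ} (hf : ContDiff ℝ 1 f) {s : ℝ} (hs : s ≠ 0) :
    HasDerivAt (sphereMean f) (sphereMean (eulerDeriv f) s / s) s := by
  have hc : Continuous fun p : ℝ × sphere (0 : E) 1 => fderiv ℝ f (p.1 • p.2) (p.2 : E) :=
    ((hf.continuous_fderiv one_ne_zero).comp (by fun_prop)).clm_apply (by fun_prop)
  obtain ⟨C, hC⟩ := ((isCompact_closedBall s 1).prod isCompact_univ).exists_bound_of_continuousOn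
    hc.continuousOn
  have hderiv : HasDerivAt (sphereMean f)
      (∫ w, fderiv ℝ f (s • w) (w : E) ∂uniformOnSphere E) s :=
    (hasDerivAt_integral_of_dominated_loc_of_deriv_le (bound := fun _ => C)
      (F := fun (t : ℝ) (w : sphere (0 : E) 1) => f (t • w))
      (F' := fun (t : ℝ) (w : sphere (0 : E) 1) => fderiv ℝ f (t • w) (w : E))
      (ball_mem_nhds s one_pos)
      (.of_forall fun t => (integrable_smul_sphere hf.continuous t).aestronglyMeasurable)
      (integrable_smul_sphere hf.continuous s)
      (hc.comp (by fun_prop : Continuous fun w : sphere (0 : E) 1 => (s, w))).aestronglyMeasurable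
      (.of_forall fun w t ht => hC (t, w) ⟨ball_subset_closedBall ht, mem_univ _⟩)
      (integrable_const _)
      (.of_forall fun w t _ => ((hf.differentiable one_ne_zero _).hasFDerivAt.comp_hasDerivAt t
        (by simpa using (hasDerivAt_id t).smul_const (w : E))))).2
  convert hderiv using 1
  rw [div_eq_iff hs, sphereMean, ← integral_mul_const]
  simp [eulerDeriv, mul_comm]

end SphereMean

section HausdorffMeasureSphere

lemma finrank_orthogonal_span_singleton_eq_sub_one [FiniteDimensional ℝ E] {x : E}
    (hx : x ≠ 0) :
    (finrank ℝ (ℝ ∙ x)ᗮ : ℝ) = finrank ℝ E - 1 := by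
  rw [← Submodule.finrank_add_finrank_orthogonal (ℝ ∙ x), finrank_span_singleton hx]
  simp

lemma mem_stereographic_neg_source (x : sphere (0 : E) 1) :
    x ∈ (stereographic (norm_eq_of_mem_sphere (-x))).source := by
  rw [stereographic_source]
  exact fun h => ne_neg_of_mem_unit_sphere ℝ x (Subtype.ext (congrArg Subtype.val h))

lemma stereographic_neg_symm_zero (x : sphere (0 : E) 1) :
    (stereographic (norm_eq_of_mem_sphere (-x))).symm 0 = x := by
  rw [← stereographic_neg_apply x,
    OpenPartialHomeomorph.left_inv _ (mem_stereographic_neg_source x)]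

variable [MeasurableSpace E] [BorelSpace E]

lemma hausdorffMeasure_restrict_sphere {d : ℝ} (hd : 0 ≤ d) (p : E) {r : ℝ} (hr : 0 < r) :
    (μH[d] : Measure E).restrict (sphere p r) =
      ‖r‖₊ ^ d • (μH[d] : Measure (sphere (0 : E) 1)).map
        fun w : sphere (0 : E) 1 => p + r • (w : E) := by
  ext B hB
  have hφ : Measurable fun w : sphere (0 : E) 1 => p + r • (w : E) := by fun_prop
  have himage : B ∩ sphere p r = IsometryEquiv.addLeft p '' (r •
      (Subtype.val '' ((fun w : sphere (0 : E) 1 => p + r • (w : E)) ⁻¹' B))) := by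
    rw [← image_smul, image_image, image_image]
    rw [show (fun w : sphere (0 : E) 1 => IsometryEquiv.addLeft p (r • (w : E))) =
      fun w : sphere (0 : E) 1 => p + r • (w : E) from rfl, image_preimage_eq_inter_range]
    congr 1
    ext x
    constructor
    · intro hx
      refine ⟨⟨r⁻¹ • (x - p), ?_⟩, ?_⟩
      · rw [mem_sphere_iff_norm] at hx
        simp [norm_smul, hx, abs_of_pos hr, hr.ne']
      · simp [smul_inv_smul₀ hr.ne']
    · rintro ⟨w, rfl⟩
      simp [norm_smul, abs_of_pos hr]
  rw [Measure.restrict_apply hB, himage, IsometryEquiv.hausdorffMeasure_image,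
    Measure.hausdorffMeasure_smul₀ hd hr.ne', isometry_subtype_coe.hausdorffMeasure_image (.inl hd),
    Measure.smul_apply, Measure.map_apply hφ hB]

variable [FiniteDimensional ℝ E]

instance isFiniteMeasure_hausdorffMeasure_unitSphere :
    IsFiniteMeasure (μH[(finrank ℝ E : ℝ) - 1] : Measure (sphere (0 : E) 1)) := by
  refine ⟨isCompact_univ.measure_lt_top_of_nhdsWithin fun x _ => ?_⟩
  have hx := norm_eq_of_mem_sphere (-x)
  obtain ⟨K, t, ht, hK⟩ := (contDiff_stereoInvFunAux.comp
    (ℝ ∙ ((-x : sphere (0 : E) 1) : E))ᗮ.subtypeL.contDiff).contDiffAt.exists_lipschitzOnWith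
      (x := 0)
  have hK' : LipschitzOnWith K (stereographic hx).symm t := hK
  refine ⟨(stereographic hx).symm '' (t ∩ closedBall 0 1), ?_, ?_⟩
  · rw [nhdsWithin_univ]
    simpa only [stereographic_neg_symm_zero] using
      (stereographic hx).symm.image_mem_nhds (x := 0) (mem_univ _)
        (inter_mem ht (closedBall_mem_nhds 0 one_pos))
  · rw [← finrank_orthogonal_span_singleton_eq_sub_one (ne_zero_of_mem_unit_sphere (-x))]
    refine ((hK'.mono inter_subset_left).hausdorffMeasure_image_le (by positivity)).trans_lt ?_
    exact ENNReal.mul_lt_top (by finiteness)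
      ((measure_mono inter_subset_right).trans_lt measure_closedBall_lt_top)

lemma hausdorffMeasure_unitSphere_ne_zero [Nontrivial E] :
    (μH[(finrank ℝ E : ℝ) - 1] : Measure (sphere (0 : E) 1)) univ ≠ 0 := by
  obtain ⟨x⟩ := (NormedSpace.sphere_nonempty (x := (0 : E)).2 zero_le_one).to_subtype
  have hx := norm_eq_of_mem_sphere (-x)
  obtain ⟨K, t, ht, hK⟩ : ∃ K, ∃ t ∈ 𝓝 (x : E), LipschitzOnWith K (stereoToFun (-x : E)) t := by
    refine (contDiffOn_stereoToFun.contDiffAt (IsOpen.mem_nhds ?_ ?_)).exists_lipschitzOnWith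
    · exact isOpen_ne_fun (by fun_prop) (by fun_prop)
    · norm_num
  have hpos := Measure.measure_pos_of_mem_nhds
    (μH[finrank ℝ (ℝ ∙ ((-x : sphere (0 : E) 1) : E))ᗮ] : Measure _)
    ((stereographic hx).image_mem_nhds (mem_stereographic_neg_source x)
      (continuous_subtype_val.continuousAt ht))
  have hK' : LipschitzOnWith K (stereographic hx) (Subtype.val ⁻¹' t) :=
    fun y hy z hz => hK hy hz
  intro hzero
  refine hpos.ne' (le_antisymm ((hK'.hausdorffMeasure_image_le (by positivity)).trans ?_) bot_le)
  rw [finrank_orthogonal_span_singleton_eq_sub_one (ne_zero_of_mem_unit_sphere (-x)),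
    measure_mono_null (subset_univ _) hzero, mul_zero]

lemma hausdorffMeasure_unitSphere_eq_smul [Nontrivial E] :
    (μH[(finrank ℝ E : ℝ) - 1] : Measure (sphere (0 : E) 1)) =
      (μH[(finrank ℝ E : ℝ) - 1] : Measure (sphere (0 : E) 1)) univ • uniformOnSphere E := by
  have hH : IsUniformlyDistributed (μH[(finrank ℝ E : ℝ) - 1] : Measure (sphere (0 : E) 1)) :=
    isUniformlyDistributed_of_map_unitSphereIsometry fun R =>
      (unitSphereIsometry R).map_hausdorffMeasure _
  have hU : IsUniformlyDistributed (uniformOnSphere E) :=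
    isUniformlyDistributed_of_map_unitSphereIsometry uniformOnSphere_map_unitSphereIsometry
  simpa using hH.smul_eq_smul hU

variable (E) in
/-- The `(d - 1)`-dimensional Hausdorff measure of the unit sphere in a space of dimension `d`. -/
def sphereHausdorffArea : ℝ :=
  (μH[(finrank ℝ E : ℝ) - 1] : Measure (sphere (0 : E) 1)).real univ

lemma sphereHausdorffArea_pos [Nontrivial E] : 0 < sphereHausdorffArea E :=
  ENNReal.toReal_pos hausdorffMeasure_unitSphere_ne_zero (by finiteness)

theorem setIntegral_sphere_hausdorffMeasure [Nontrivial E] {f : E → ℝ} (hf : Continuous f) (p : E)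
    {r : ℝ} (hr : 0 < r) :
    ∫ x in sphere p r, f x ∂μH[(finrank ℝ E : ℝ) - 1] =
      sphereHausdorffArea E * r ^ (finrank ℝ E - 1) * sphereMean (fun x => f (p + x)) r := by
  have hd : (finrank ℝ E : ℝ) - 1 = (finrank ℝ E - 1 : ℕ) := by
    rw [Nat.cast_pred Module.finrank_pos]
  rw [hausdorffMeasure_restrict_sphere (by rw [hd]; positivity) p hr,
    integral_smul_nnreal_measure, integral_map (by fun_prop) hf.aestronglyMeasurable,
    hausdorffMeasure_unitSphere_eq_smul, integral_smul_measure, hd, NNReal.rpow_natCast]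
  simp only [smul_eq_mul, NNReal.smul_def, NNReal.coe_pow, coe_nnnorm, Real.norm_eq_abs,
    abs_of_pos hr, sphereHausdorffArea, hd, measureReal_def, sphereMean]
  ring

end HausdorffMeasureSphere

section Polar

variable [FiniteDimensional ℝ E] [MeasurableSpace E] [BorelSpace E]

variable (E) in
/-- The surface area of the unit sphere, as it occurs in polar coordinates. -/
def unitSphereArea : ℝ := (volume : Measure E).toSphere.real univ

variable [Nontrivial E]

lemma unitSphereArea_pos : 0 < unitSphereArea E :=
  ENNReal.toReal_pos (Measure.measure_univ_ne_zero.2 (Measure.toSphere_ne_zero _)) (by finiteness)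

lemma integral_toSphere (f : sphere (0 : E) 1 → ℝ) :
    ∫ w, f w ∂(volume : Measure E).toSphere = unitSphereArea E * ∫ w, f w ∂uniformOnSphere E := by
  rw [toSphere_eq_smul_uniformOnSphere, integral_smul_measure]
  rfl

theorem integral_eq_integral_sphereMean {F : E → ℝ} (hF : Integrable F) :
    ∫ x, F x = unitSphereArea E * ∫ t in Ioi (0 : ℝ), t ^ (finrank ℝ E - 1) * sphereMean F t := by
  have hpres := (volume : Measure E).measurePreserving_homeomorphUnitSphereProd
  have hemb := (homeomorphUnitSphereProd E).measurableEmbedding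
  let G : sphere (0 : E) 1 × Ioi (0 : ℝ) → ℝ := fun p => F (p.2.1 • p.1.1)
  have hcomp : G ∘ homeomorphUnitSphereProd E = F ∘ Subtype.val := by
    ext x
    simp [G, smul_inv_smul₀ (norm_ne_zero_iff.2 x.2)]
  have hG : Integrable G ((volume : Measure E).toSphere.prod
      (Measure.volumeIoiPow (finrank ℝ E - 1))) := by
    rw [← hpres.integrable_comp_emb hemb, hcomp,
      ← integrableOn_iff_comap_subtypeVal (measurableSet_singleton _).compl]
    exact hF.integrableOn
  calc ∫ x, F x = ∫ x : ({0}ᶜ : Set E), F x ∂(volume.comap Subtype.val) := by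
        rw [integral_subtype_comap (measurableSet_singleton _).compl, restrict_compl_singleton]
    _ = ∫ p, G p ∂(volume : Measure E).toSphere.prod
          (Measure.volumeIoiPow (finrank ℝ E - 1)) := by
        rw [← hpres.integral_comp hemb]
        exact integral_congr_ae (.of_forall fun x => (congrFun hcomp x).symm)
    _ = ∫ t : Ioi (0 : ℝ), unitSphereArea E * sphereMean F t
          ∂Measure.volumeIoiPow (finrank ℝ E - 1) := by
        rw [integral_prod_symm _ hG]
        exact integral_congr_ae (.of_forall fun t => integral_toSphere _)
    _ = _ := by
        simp only [Measure.volumeIoiPow, ENNReal.ofReal]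
        rw [integral_withDensity_eq_integral_smul
            (measurable_subtype_coe.pow_const _).real_toNNReal,
          integral_subtype_comap measurableSet_Ioi fun t : ℝ =>
            (t ^ (finrank ℝ E - 1)).toNNReal • (unitSphereArea E * sphereMean F t),
          ← integral_const_mul]
        refine setIntegral_congr_fun measurableSet_Ioi fun t ht => ?_
        simp only [NNReal.smul_def, Real.coe_toNNReal _ (pow_nonneg (le_of_lt ht) _), smul_eq_mul]
        ring

theorem setIntegral_ball_eq_integral_sphereMean {F : E → ℝ} (hF : Continuous F) {s : ℝ}
    (hs : 0 ≤ s) :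
    ∫ x in ball 0 s, F x =
      unitSphereArea E * ∫ t in (0 : ℝ)..s, t ^ (finrank ℝ E - 1) * sphereMean F t := by
  have hint : Integrable ((ball 0 s).indicator F) :=
    ((hF.continuousOn.integrableOn_compact (isCompact_closedBall 0 s)).mono_set
      ball_subset_closedBall).integrable_indicator measurableSet_ball
  have hmean {t : ℝ} (ht : 0 < t) :
      sphereMean ((ball 0 s).indicator F) t = (Iio s).indicator (sphereMean F) t := by
    by_cases hts : t < s <;>
      simp [sphereMean, indicator, norm_smul, abs_of_pos ht, hts]
  rw [← integral_indicator measurableSet_ball, integral_eq_integral_sphereMean hint,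
    intervalIntegral.integral_of_le hs, integral_Ioc_eq_integral_Ioo, ← Ioi_inter_Iio,
    ← setIntegral_indicator measurableSet_Iio]
  congr 1
  refine setIntegral_congr_fun measurableSet_Ioi fun t ht => ?_
  simp only [hmean ht, indicator_mul_right]

end Polar

section DivergenceTheorem

/-- The derivative of `f` in the direction `v`. -/
def dirDeriv (v : E) (f : E → ℝ) (x : E) : ℝ :=
  fderiv ℝ f x v

lemma continuous_dirDeriv {f : E → ℝ} (hf : ContDiff ℝ 1 f) (v : E) : Continuous (dirDeriv v f) :=
  (hf.continuous_fderiv one_ne_zero).clm_apply continuous_const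

lemma exists_radial_primitive {κ : ℝ → ℝ} (hκ : Continuous κ) {R : ℝ} (hR : 0 ≤ R)
    (hκR : ∀ t, R ≤ t → κ t = 0) :
    ∃ Φ : ℝ → ℝ, Continuous Φ ∧ (∀ t, 0 ≤ t → HasDerivAt Φ (t * κ t) t) ∧
      (∀ t, R ≤ t → Φ t = 0) ∧
      ∀ x : E, HasFDerivAt (fun x => Φ ‖x‖) (κ ‖x‖ • innerSL ℝ x) x := by
  -- As a function of `t ^ 2` the primitive is visibly differentiable at the origin of `E`.
  let K : ℝ → ℝ := fun q => ∫ p in (R ^ 2)..q, κ (√p) / 2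
  have hcont : Continuous fun p => κ (√p) / 2 := by fun_prop
  have hK (q : ℝ) : HasDerivAt K (κ (√q) / 2) q :=
    intervalIntegral.integral_hasDerivAt_right (hcont.intervalIntegrable _ _)
      hcont.stronglyMeasurable.stronglyMeasurableAtFilter hcont.continuousAt
  have hKcont : Continuous K := continuous_iff_continuousAt.2 fun q => (hK q).continuousAt
  refine ⟨fun t => K (t ^ 2), by fun_prop, fun t ht => ?_, fun t ht => ?_, fun x => ?_⟩
  · have h := (hK (t ^ 2)).comp t (hasDerivAt_pow 2 t)
    rw [Real.sqrt_sq ht] at h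
    exact h.congr_deriv (by ring)
  · refine intervalIntegral.integral_zero_ae (.of_forall fun p hp => ?_)
    rw [uIoc_of_le (by gcongr)] at hp
    simp [hκR _ (Real.le_sqrt_of_sq_le hp.1.le)]
  · have h := (hK (‖x‖ ^ 2)).comp_hasFDerivAt x (hasStrictFDerivAt_norm_sq x).hasFDerivAt
    rw [Real.sqrt_sq (norm_nonneg x)] at h
    refine h.congr_fderiv ?_
    ext v
    simp only [smul_apply, coe_innerSL_apply, nsmul_eq_mul, Nat.cast_ofNat, smul_eq_mul]
    ring

variable [FiniteDimensional ℝ E] [MeasurableSpace E] [BorelSpace E] {F : E → ℝ}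

lemma setIntegral_ball_mul_dirDeriv (hF : ContDiff ℝ 1 F) (v : E) {κ Φ : ℝ → ℝ}
    (hκ : Continuous κ) (hΦc : Continuous Φ) {R : ℝ} (hκR : ∀ t, R ≤ t → κ t = 0)
    (hΦR : ∀ t, R ≤ t → Φ t = 0)
    (hΦ : ∀ x : E, HasFDerivAt (fun x => Φ ‖x‖) (κ ‖x‖ • innerSL ℝ x) x) :
    ∫ x in ball 0 R, Φ ‖x‖ * dirDeriv v F x =
      -∫ x in ball 0 R, κ ‖x‖ * (F x * ⟪v, x⟫) := by
  have hoff {G : E → ℝ} (hG : ∀ x, R ≤ ‖x‖ → G x = 0) : ∫ x in ball 0 R, G x = ∫ x, G x :=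
    setIntegral_eq_integral_of_forall_compl_eq_zero fun x hx => hG x (by simpa using hx)
  have hint {G : E → ℝ} (hGc : Continuous G) (hG : ∀ x, R ≤ ‖x‖ → G x = 0) : Integrable G :=
    hGc.integrable_of_hasCompactSupport <| HasCompactSupport.intro (isCompact_closedBall 0 R)
      fun x hx => hG x (le_of_lt (by simpa using hx))
  have hF' := continuous_dirDeriv hF v
  have hfderiv (x : E) : fderiv ℝ (fun x => Φ ‖x‖) x v = κ ‖x‖ * ⟪v, x⟫ := by
    simp [(hΦ x).fderiv, real_inner_comm]
  have hFc := hF.continuous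
  have hibp := integral_mul_fderiv_eq_neg_fderiv_mul_of_integrable (μ := volume)
    (f := fun x : E => Φ ‖x‖) (g := F) (v := v)
    (hint (by simp only [hfderiv]; fun_prop) fun x hx => by simp [hfderiv, hκR _ hx])
    (hint (G := fun x => Φ ‖x‖ * dirDeriv v F x) (by fun_prop) fun x hx => by simp [hΦR _ hx])
    (hint (by fun_prop) fun x hx => by simp [hΦR _ hx])
    (fun x _ => (hΦ x).differentiableAt) (fun x _ => hF.differentiable one_ne_zero x)
  rw [hoff fun x hx => by simp [hΦR _ hx], hoff fun x hx => by simp [hκR _ hx]]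
  simpa only [hfderiv, mul_assoc, mul_comm (F _), dirDeriv] using hibp

lemma sphereMean_radial_mul (κ : ℝ → ℝ) {t : ℝ} (ht : 0 ≤ t) :
    sphereMean (fun x => κ ‖x‖ * F x) t = κ t * sphereMean F t := by
  simp [sphereMean, norm_smul, abs_of_nonneg ht, integral_const_mul]

variable [Nontrivial E]

lemma setIntegral_ball_radial_mul (hF : Continuous F) {κ : ℝ → ℝ} (hκ : Continuous κ) {R : ℝ}
    (hR : 0 ≤ R) :
    ∫ x in ball 0 R, κ ‖x‖ * F x = unitSphereArea E *
      ∫ t in (0 : ℝ)..R, κ t * (t ^ (finrank ℝ E - 1) * sphereMean F t) := by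
  rw [setIntegral_ball_eq_integral_sphereMean (by fun_prop) hR]
  congr 1
  refine intervalIntegral.integral_congr fun t ht => ?_
  rw [uIcc_of_le hR] at ht
  simp only [sphereMean_radial_mul κ ht.1]
  ring

lemma hasDerivAt_integral_pow_mul_sphereMean (hF : Continuous F) (t : ℝ) :
    HasDerivAt (fun t => ∫ τ in (0 : ℝ)..t, τ ^ (finrank ℝ E - 1) * sphereMean F τ)
      (t ^ (finrank ℝ E - 1) * sphereMean F t) t :=
  have hm : Continuous fun t => t ^ (finrank ℝ E - 1) * sphereMean F t :=
    (continuous_pow _).mul (continuous_sphereMean hF)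
  intervalIntegral.integral_hasDerivAt_right (hm.intervalIntegrable 0 t)
    hm.stronglyMeasurable.stronglyMeasurableAtFilter hm.continuousAt

lemma continuous_integral_pow_mul_sphereMean (hF : Continuous F) :
    Continuous fun t : ℝ => ∫ τ in (0 : ℝ)..t, τ ^ (finrank ℝ E - 1) * sphereMean F τ :=
  continuous_iff_continuousAt.2 fun t =>
    (hasDerivAt_integral_pow_mul_sphereMean hF t).continuousAt

/-- The difference of the two sides of the divergence theorem on `ball 0 t` for the vector field
`x ↦ F x • v`, both divided by `unitSphereArea E`. -/
def fluxDefect (v : E) (F : E → ℝ) (t : ℝ) : ℝ :=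
  t * (∫ τ in (0 : ℝ)..t, τ ^ (finrank ℝ E - 1) * sphereMean (dirDeriv v F) τ) -
    t ^ (finrank ℝ E - 1) * sphereMean (fun x => F x * ⟪v, x⟫) t

lemma continuous_fluxDefect (hF : ContDiff ℝ 1 F) (v : E) : Continuous (fluxDefect v F) := by
  have hA := continuous_integral_pow_mul_sphereMean (continuous_dirDeriv hF v)
  have hFc := hF.continuous
  have hm : Continuous (sphereMean fun x => F x * ⟪v, x⟫) := continuous_sphereMean (by fun_prop)
  unfold fluxDefect
  fun_prop

lemma integral_mul_fluxDefect_eq_zero (hF : ContDiff ℝ 1 F) (v : E) {κ : ℝ → ℝ}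
    (hκ : Continuous κ) {R : ℝ} (hR : 0 ≤ R) (hκR : ∀ t, R ≤ t → κ t = 0) :
    ∫ t in (0 : ℝ)..R, κ t * fluxDefect v F t = 0 := by
  obtain ⟨Φ, hΦc, hΦ', hΦR, hΦ⟩ := exists_radial_primitive (E := E) hκ hR hκR
  have hF' := continuous_dirDeriv hF v
  have hFc := hF.continuous
  have hAc := continuous_integral_pow_mul_sphereMean hF'
  have hm := continuous_sphereMean hF'
  have hG : Continuous fun x => F x * ⟪v, x⟫ := by fun_prop
  have hmG := continuous_sphereMean hG
  have hball := setIntegral_ball_mul_dirDeriv hF v hκ hΦc hκR hΦR hΦ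
  rw [setIntegral_ball_radial_mul hF' hΦc hR, setIntegral_ball_radial_mul hG hκ hR,
    ← mul_neg] at hball
  have hibp := intervalIntegral.integral_mul_deriv_eq_deriv_mul (a := 0) (b := R)
    (fun t ht => hΦ' t (by rw [uIcc_of_le hR] at ht; exact ht.1))
    (fun t _ => hasDerivAt_integral_pow_mul_sphereMean hF' t)
    (Continuous.intervalIntegrable (by fun_prop) 0 R)
    (Continuous.intervalIntegrable (by fun_prop) 0 R)
  rw [mul_left_cancel₀ unitSphereArea_pos.ne' hball, hΦR R le_rfl,
    intervalIntegral.integral_same] at hibp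
  simp only [fluxDefect, mul_sub]
  rw [intervalIntegral.integral_sub
    ((hκ.fun_mul (continuous_id'.fun_mul hAc)).intervalIntegrable 0 R)
    (Continuous.intervalIntegrable (by fun_prop) 0 R)]
  simp only [mul_left_comm (κ _), ← mul_assoc] at hibp ⊢
  linarith

theorem mul_setIntegral_ball_dirDeriv (hF : ContDiff ℝ 1 F) (v : E) {s : ℝ} (hs : 0 ≤ s) :
    s * ∫ x in ball 0 s, dirDeriv v F x =
      unitSphereArea E * (s ^ (finrank ℝ E - 1) * sphereMean (fun x => F x * ⟪v, x⟫) s) := by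
  have hh := continuous_fluxDefect hF v
  suffices hs0 : fluxDefect v F s = 0 by
    rw [setIntegral_ball_eq_integral_sphereMean (continuous_dirDeriv hF v) hs]
    rw [fluxDefect] at hs0
    linear_combination unitSphereArea E * hs0
  have hzero := integral_mul_fluxDefect_eq_zero hF v (R := s + 1)
    (κ := fun t => max (s + 1 - t) 0 * fluxDefect v F t) (by fun_prop) (by linarith)
    (fun t ht => by simp [ht])
  by_contra hne
  refine (intervalIntegral.integral_pos (a := 0) (b := s + 1)
    (f := fun t => max (s + 1 - t) 0 * fluxDefect v F t * fluxDefect v F t) (by linarith)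
    (by fun_prop) (fun t _ => ?_) ⟨s, ⟨hs, by linarith⟩, ?_⟩).ne' hzero
  · rw [mul_assoc]
    exact mul_nonneg (le_max_right _ _) (mul_self_nonneg _)
  · simpa [mul_assoc] using hne

end DivergenceTheorem

section DirDeriv

variable {f g : E → ℝ} {n : WithTop ℕ∞}

lemma contDiff_dirDeriv (hf : ContDiff ℝ (n + 1) f) (v : E) : ContDiff ℝ n (dirDeriv v f) :=
  (hf.fderiv_right le_rfl).clm_apply contDiff_const

lemma contDiff_eulerDeriv (hf : ContDiff ℝ (n + 1) f) : ContDiff ℝ n (eulerDeriv f) :=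
  (hf.fderiv_right le_rfl).clm_apply contDiff_id

lemma dirDeriv_congr {x : E} (h : f =ᶠ[𝓝 x] g) (v : E) : dirDeriv v f x = dirDeriv v g x := by
  rw [dirDeriv, dirDeriv, h.fderiv_eq]

@[simp]
lemma dirDeriv_const (v : E) (c : ℝ) : dirDeriv v (fun _ => c) = 0 := by
  ext x
  simp [dirDeriv]

lemma dirDeriv_mul (hf : ContDiff ℝ 1 f) (hg : ContDiff ℝ 1 g) (v x : E) :
    dirDeriv v (fun y => f y * g y) x = f x * dirDeriv v g x + g x * dirDeriv v f x := by
  simp [dirDeriv,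
    fderiv_fun_mul (hf.differentiable one_ne_zero x) (hg.differentiable one_ne_zero x)]

lemma dirDeriv_add (hf : ContDiff ℝ 1 f) (hg : ContDiff ℝ 1 g) (v x : E) :
    dirDeriv v (fun y => f y + g y) x = dirDeriv v f x + dirDeriv v g x := by
  simp [dirDeriv,
    fderiv_fun_add (hf.differentiable one_ne_zero x) (hg.differentiable one_ne_zero x)]

lemma dirDeriv_const_mul (hf : ContDiff ℝ 1 f) (c : ℝ) (v x : E) :
    dirDeriv v (fun y => c * f y) x = c * dirDeriv v f x := by
  simp [dirDeriv, fderiv_const_mul (hf.differentiable one_ne_zero x)]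

lemma dirDeriv_sub_const_mul (hf : ContDiff ℝ 1 f) (hg : ContDiff ℝ 1 g) (c : ℝ) (v x : E) :
    dirDeriv v (fun y => f y - c * g y) x = dirDeriv v f x - c * dirDeriv v g x := by
  rw [← dirDeriv_const_mul hg]
  simp [dirDeriv, fderiv_fun_sub (hf.differentiable one_ne_zero x)
    ((hg.differentiable one_ne_zero x).const_mul c)]

lemma dirDeriv_sum {ι : Type*} [Fintype ι] {F : ι → E → ℝ} (hF : ∀ i, ContDiff ℝ 1 (F i))
    (v x : E) : dirDeriv v (fun y => ∑ i, F i y) x = ∑ i, dirDeriv v (F i) x := by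
  simp [dirDeriv, fderiv_fun_sum fun i _ => (hF i).differentiable one_ne_zero x]

lemma dirDeriv_comm (hf : ContDiff ℝ 2 f) (v w : E) :
    dirDeriv v (dirDeriv w f) = dirDeriv w (dirDeriv v f) := by
  ext x
  have hd := (hf.fderiv_right (m := 1) le_rfl).differentiable one_ne_zero x
  have hsymm : IsSymmSndFDerivAt ℝ f x := hf.contDiffAt.isSymmSndFDerivAt (by simp)
  have key (v w : E) : dirDeriv v (dirDeriv w f) x = fderiv ℝ (fderiv ℝ f) x v w := by
    change fderiv ℝ (fun y => fderiv ℝ f y w) x v = _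
    simp [fderiv_clm_apply hd (differentiableAt_const w)]
  rw [key, key, hsymm]

lemma dirDeriv_eulerDeriv (hf : ContDiff ℝ 2 f) (v : E) :
    dirDeriv v (eulerDeriv f) = fun x => eulerDeriv (dirDeriv v f) x + dirDeriv v f x := by
  ext x
  have hd := (hf.fderiv_right (m := 1) le_rfl).differentiable one_ne_zero x
  have hsymm : IsSymmSndFDerivAt ℝ f x := hf.contDiffAt.isSymmSndFDerivAt (by simp)
  have h1 : dirDeriv v (eulerDeriv f) x = fderiv ℝ (fderiv ℝ f) x v x + dirDeriv v f x := by
    change fderiv ℝ (fun y => fderiv ℝ f y y) x v = _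
    simp [fderiv_clm_apply hd differentiableAt_fun_id, dirDeriv, add_comm]
  have h2 : eulerDeriv (dirDeriv v f) x = fderiv ℝ (fderiv ℝ f) x x v := by
    change fderiv ℝ (fun y => fderiv ℝ f y v) x x = _
    simp [fderiv_clm_apply hd (differentiableAt_const v)]
  rw [h1, h2, hsymm]

lemma eulerDeriv_sq (hf : ContDiff ℝ 1 f) (x : E) :
    eulerDeriv (fun y => f y ^ 2) x = 2 * (f x * eulerDeriv f x) := by
  simp only [eulerDeriv, fderiv_fun_pow 2 (hf.differentiable one_ne_zero x),
    Nat.add_one_sub_one, pow_one, nsmul_eq_mul, Nat.cast_ofNat, smul_apply, smul_eq_mul]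
  ring

variable {ι : Type*} [Fintype ι]

lemma eulerDeriv_eq_sum (b : OrthonormalBasis ι ℝ E) (f : E → ℝ) (x : E) :
    eulerDeriv f x = ∑ i, dirDeriv (b i) f x * ⟪b i, x⟫ := by
  calc fderiv ℝ f x x = fderiv ℝ f x (∑ i, ⟪b i, x⟫ • b i) := by rw [b.sum_repr' x]
    _ = _ := by simp [dirDeriv, mul_comm]

variable [FiniteDimensional ℝ E]

lemma inner_gradient_gradient_eq_sum (b : OrthonormalBasis ι ℝ E) (f g : E → ℝ) (x : E) :
    ⟪∇ f x, ∇ g x⟫ = ∑ i, dirDeriv (b i) f x * dirDeriv (b i) g x := by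
  rw [← b.sum_inner_mul_inner]
  exact Finset.sum_congr rfl fun i _ => by
    rw [inner_gradient_left, real_inner_comm, inner_gradient_left]
    rfl

lemma laplacian_eq_sum_dirDeriv (b : OrthonormalBasis ι ℝ E) (hf : ContDiff ℝ 2 f) (x : E) :
    Δ f x = ∑ i, dirDeriv (b i) (dirDeriv (b i) f) x := by
  have hd := (hf.fderiv_right (m := 1) le_rfl).differentiable one_ne_zero x
  rw [InnerProductSpace.laplacian_eq_iteratedFDeriv_orthonormalBasis f b]
  refine Finset.sum_congr rfl fun i _ => ?_
  change _ = fderiv ℝ (fun y => fderiv ℝ f y (b i)) x (b i)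
  simp [fderiv_clm_apply hd (differentiableAt_const (b i)), iteratedFDeriv_two_apply]

lemma laplacian_dirDeriv (hf : ContDiff ℝ 3 f) (v x : E) :
    Δ (dirDeriv v f) x = dirDeriv v (Δ f) x := by
  let b := stdOrthonormalBasis ℝ E
  have hf2 : ContDiff ℝ 2 f := hf.of_le (by norm_num)
  have hb (w : E) : ContDiff ℝ 2 (dirDeriv w f) := contDiff_dirDeriv (n := 2) hf w
  rw [laplacian_eq_sum_dirDeriv b (hb v), funext (laplacian_eq_sum_dirDeriv b hf2),
    dirDeriv_sum fun i => contDiff_dirDeriv (n := 1) (hb _) _]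
  refine Finset.sum_congr rfl fun i _ => ?_
  rw [dirDeriv_comm hf2 (b i) v, dirDeriv_comm (hb _) (b i) v]

lemma laplacian_eulerDeriv (hf : ContDiff ℝ 3 f) (x : E) :
    Δ (eulerDeriv f) x = eulerDeriv (Δ f) x + 2 * Δ f x := by
  let b := stdOrthonormalBasis ℝ E
  have hf2 : ContDiff ℝ 2 f := hf.of_le (by norm_num)
  have h2 (w : E) : ContDiff ℝ 2 (dirDeriv w f) := contDiff_dirDeriv (n := 2) hf w
  have h1 (w : E) : ContDiff ℝ 1 (dirDeriv w (dirDeriv w f)) := contDiff_dirDeriv (n := 1) (h2 w) w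
  have hsum : eulerDeriv (Δ f) x = ∑ i, eulerDeriv (dirDeriv (b i) (dirDeriv (b i) f)) x := by
    rw [funext (laplacian_eq_sum_dirDeriv b hf2)]
    exact dirDeriv_sum (fun i => h1 (b i)) x x
  rw [laplacian_eq_sum_dirDeriv b (contDiff_eulerDeriv (n := 2) hf), hsum,
    laplacian_eq_sum_dirDeriv b hf2, Finset.mul_sum, ← Finset.sum_add_distrib]
  refine Finset.sum_congr rfl fun i _ => ?_
  rw [dirDeriv_eulerDeriv hf2,
    dirDeriv_add (contDiff_eulerDeriv (n := 1) (h2 _)) ((h2 _).of_le (by norm_num)),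
    dirDeriv_eulerDeriv (h2 _)]
  ring

end DirDeriv

section Green

variable [FiniteDimensional ℝ E] {f g : E → ℝ}

lemma continuous_gradient (hf : ContDiff ℝ 1 f) : Continuous (∇ f) :=
  (InnerProductSpace.toDual ℝ E).symm.continuous.comp (hf.continuous_fderiv one_ne_zero)

variable [MeasurableSpace E] [BorelSpace E] [Nontrivial E]

/-- **Green's first identity** on a ball. -/
theorem mul_setIntegral_ball_inner_gradient_add (hf : ContDiff ℝ 1 f) (hg : ContDiff ℝ 2 g) {s : ℝ}
    (hs : 0 ≤ s) :
    s * ∫ x in ball 0 s, (⟪∇ f x, ∇ g x⟫ + f x * Δ g x) = unitSphereArea E *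
      (s ^ (finrank ℝ E - 1) * sphereMean (fun x => f x * eulerDeriv g x) s) := by
  let b := stdOrthonormalBasis ℝ E
  have hdg (i) : ContDiff ℝ 1 (dirDeriv (b i) g) := contDiff_dirDeriv (n := 1) hg _
  have hF (i) : ContDiff ℝ 1 fun x => f x * dirDeriv (b i) g x := hf.mul (hdg i)
  have hbulk (x : E) : ⟪∇ f x, ∇ g x⟫ + f x * Δ g x =
      ∑ i, dirDeriv (b i) (fun x => f x * dirDeriv (b i) g x) x := by
    simp_rw [inner_gradient_gradient_eq_sum b, laplacian_eq_sum_dirDeriv b hg,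
      dirDeriv_mul hf (hdg _), Finset.mul_sum, ← Finset.sum_add_distrib, add_comm, mul_comm]
  have hflux : sphereMean (fun x => f x * eulerDeriv g x) s =
      ∑ i, sphereMean (fun x => f x * dirDeriv (b i) g x * ⟪b i, x⟫) s := by
    rw [← sphereMean_sum fun i => (hF i).continuous.fun_mul (by fun_prop)]
    simp_rw [eulerDeriv_eq_sum b g, Finset.mul_sum, mul_assoc]
  simp_rw [hbulk, hflux, Finset.mul_sum]
  have hint (i) : IntegrableOn (dirDeriv (b i) fun x => f x * dirDeriv (b i) g x) (ball 0 s) :=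
    ((continuous_dirDeriv (hF i) _).continuousOn.integrableOn_compact
      (isCompact_closedBall 0 s)).mono_set ball_subset_closedBall
  rw [integral_finsetSum _ fun i _ => hint i, Finset.mul_sum]
  exact Finset.sum_congr rfl fun i _ => mul_setIntegral_ball_dirDeriv (hF i) (b i) hs

end Green

section Reflection

lemma fderiv_comp_neg_apply (f : E → ℝ) (x v : E) :
    fderiv ℝ (fun y => f (-y)) x v = -fderiv ℝ f (-x) v := by
  change fderiv ℝ (f ∘ ContinuousLinearEquiv.neg ℝ) x v = _
  rw [ContinuousLinearEquiv.comp_right_fderiv]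
  simp

lemma dirDeriv_comp_neg (f : E → ℝ) (v x : E) :
    dirDeriv v (fun y => f (-y)) x = -dirDeriv v f (-x) :=
  fderiv_comp_neg_apply f x v

lemma eulerDeriv_comp_neg (f : E → ℝ) (x : E) :
    eulerDeriv (fun y => f (-y)) x = eulerDeriv f (-x) := by
  simp [eulerDeriv, fderiv_comp_neg_apply]

variable [FiniteDimensional ℝ E]

lemma laplacian_comp_neg {f : E → ℝ} (hf : ContDiff ℝ 2 f) (x : E) :
    Δ (fun y => f (-y)) x = Δ f (-x) := by
  have h := (-ContinuousLinearMap.id ℝ E).iteratedFDeriv_comp_right hf x (i := 2) (by norm_num)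
  simp only [Function.comp_def, neg_apply, ContinuousLinearMap.id_apply] at h
  simp [InnerProductSpace.laplacian_eq_iteratedFDeriv_stdOrthonormalBasis, h,
    iteratedFDeriv_two_apply]

lemma laplacian_comp_const_add (f : E → ℝ) (p x : E) :
    Δ (fun y => f (p + y)) x = Δ f (p + x) := by
  simp [InnerProductSpace.laplacian_eq_iteratedFDeriv_stdOrthonormalBasis,
    iteratedFDeriv_comp_add_left]

lemma sphereMean_comp_neg [MeasurableSpace E] [BorelSpace E] (f : E → ℝ) (s : ℝ) :
    sphereMean (fun x => f (-x)) s = sphereMean f s :=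
  sphereMean_comp_linearIsometryEquiv f (LinearIsometryEquiv.neg ℝ) s

end Reflection

section SmoothHarmonic

variable [FiniteDimensional ℝ E]

/-- `f` is smooth and its restriction to `ball 0 R` is harmonic. Smoothness is required on the whole
space so that derivatives and spherical means of `f` need no domain restrictions. -/
structure IsSmoothHarmonic (f : E → ℝ) (R : ℝ) : Prop where
  contDiff : ContDiff ℝ ∞ f
  laplacian_eq_zero : ∀ x ∈ ball 0 R, Δ f x = 0

namespace IsSmoothHarmonic

variable {f g : E → ℝ} {R : ℝ}

lemma contDiff_of_le (hf : IsSmoothHarmonic f R) (n : ℕ∞ω) [ENat.LEInfty n] : ContDiff ℝ n f :=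
  hf.contDiff.of_le ENat.LEInfty.out

protected lemma continuous (hf : IsSmoothHarmonic f R) : Continuous f :=
  hf.contDiff.continuous

lemma eventuallyEq_laplacian_zero (hf : IsSmoothHarmonic f R) {x : E} (hx : x ∈ ball 0 R) :
    Δ f =ᶠ[𝓝 x] fun _ => 0 :=
  Filter.eventually_of_mem (isOpen_ball.mem_nhds hx) hf.laplacian_eq_zero

protected lemma const (c R : ℝ) : IsSmoothHarmonic (fun _ : E => c) R where
  contDiff := contDiff_const
  laplacian_eq_zero := by simp

protected lemma dirDeriv (hf : IsSmoothHarmonic f R) (v : E) :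
    IsSmoothHarmonic (dirDeriv v f) R where
  contDiff := contDiff_dirDeriv (n := ∞) hf.contDiff v
  laplacian_eq_zero x hx := by
    rw [laplacian_dirDeriv (hf.contDiff_of_le 3),
      dirDeriv_congr (hf.eventuallyEq_laplacian_zero hx), dirDeriv_const, Pi.zero_apply]

protected lemma eulerDeriv (hf : IsSmoothHarmonic f R) : IsSmoothHarmonic (eulerDeriv f) R where
  contDiff := contDiff_eulerDeriv (n := ∞) hf.contDiff
  laplacian_eq_zero x hx := by
    have h : eulerDeriv (Δ f) x = 0 :=
      (dirDeriv_congr (hf.eventuallyEq_laplacian_zero hx) x).trans (by simp)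
    rw [laplacian_eulerDeriv (hf.contDiff_of_le 3), h, hf.laplacian_eq_zero x hx, mul_zero,
      add_zero]

protected lemma sub_const_mul (hf : IsSmoothHarmonic f R) (hg : IsSmoothHarmonic g R) (c : ℝ) :
    IsSmoothHarmonic (fun x => f x - c * g x) R where
  contDiff := hf.contDiff.sub (contDiff_const.mul hg.contDiff)
  laplacian_eq_zero x hx := by
    have hf2 : ContDiff ℝ 2 f := hf.contDiff_of_le 2
    have hg2 : ContDiff ℝ 2 g := hg.contDiff_of_le 2
    change Δ (f - c • g) x = 0
    have hcg : ContDiff ℝ 2 (c • g) := hg2.const_smul c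
    rw [hf2.contDiffAt.laplacian_sub hcg.contDiffAt,
      InnerProductSpace.laplacian_smul c hg2.contDiffAt, hf.laplacian_eq_zero x hx,
      hg.laplacian_eq_zero x hx, smul_zero, sub_zero]

protected lemma comp_neg (hf : IsSmoothHarmonic f R) : IsSmoothHarmonic (fun x => f (-x)) R where
  contDiff := hf.contDiff.comp contDiff_neg
  laplacian_eq_zero x hx := by
    rw [laplacian_comp_neg (hf.contDiff_of_le 2)]
    exact hf.laplacian_eq_zero _ (by simpa using hx)

protected lemma comp_const_add (hf : IsSmoothHarmonic f R) {p : E} {ρ : ℝ} (h : ‖p‖ + ρ ≤ R) :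
    IsSmoothHarmonic (fun x => f (p + x)) ρ where
  contDiff := hf.contDiff.comp (contDiff_const.add contDiff_id)
  laplacian_eq_zero x hx := by
    rw [laplacian_comp_const_add]
    refine hf.laplacian_eq_zero _ ?_
    rw [mem_ball_zero_iff] at hx ⊢
    linarith [norm_add_le p x]

variable [MeasurableSpace E] [BorelSpace E] [Nontrivial E] {s : ℝ}

lemma hasDerivAt_sphereMean_sq (hf : IsSmoothHarmonic f R) (hs : s ≠ 0) :
    HasDerivAt (sphereMean fun x => f x ^ 2)
      (2 * sphereMean (fun x => f x * eulerDeriv f x) s / s) s := by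
  have hf1 : ContDiff ℝ 1 f := hf.contDiff_of_le 1
  simpa only [funext (eulerDeriv_sq hf1), sphereMean_const_mul]
    using hasDerivAt_sphereMean (hf1.pow 2) hs

theorem mul_setIntegral_ball_inner_gradient (hg : IsSmoothHarmonic g R) (hf : ContDiff ℝ 1 f)
    (hs : 0 ≤ s) (hsR : s ≤ R) :
    s * ∫ x in ball 0 s, ⟪∇ f x, ∇ g x⟫ = unitSphereArea E *
      (s ^ (finrank ℝ E - 1) * sphereMean (fun x => f x * eulerDeriv g x) s) := by
  rw [← mul_setIntegral_ball_inner_gradient_add hf (hg.contDiff_of_le 2) hs]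
  congr 1
  refine setIntegral_congr_fun measurableSet_ball fun x hx => ?_
  simp [hg.laplacian_eq_zero x (ball_subset_ball hsR hx)]

lemma sphereMean_mul_eulerDeriv_comm (hf : IsSmoothHarmonic f R) (hg : IsSmoothHarmonic g R)
    (hs : 0 < s) (hsR : s ≤ R) :
    sphereMean (fun x => f x * eulerDeriv g x) s =
      sphereMean (fun x => g x * eulerDeriv f x) s := by
  have h := hg.mul_setIntegral_ball_inner_gradient (hf.contDiff_of_le 1) hs.le hsR
  simp_rw [fun x => real_inner_comm (∇ g x) (∇ f x)] at h
  rw [hf.mul_setIntegral_ball_inner_gradient (hg.contDiff_of_le 1) hs.le hsR] at h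
  exact (mul_left_cancel₀ (pow_ne_zero _ hs.ne')
    (mul_left_cancel₀ unitSphereArea_pos.ne' h)).symm

lemma sphereMean_mul_eulerDeriv_self_nonneg (hf : IsSmoothHarmonic f R) (hs : 0 ≤ s)
    (hsR : s ≤ R) : 0 ≤ sphereMean (fun x => f x * eulerDeriv f x) s := by
  rcases hs.eq_or_lt with rfl | hs
  · simp [eulerDeriv]
  · have h := hf.mul_setIntegral_ball_inner_gradient (hf.contDiff_of_le 1) hs.le hsR
    have hE : 0 ≤ ∫ x in ball 0 s, ⟪∇ f x, ∇ f x⟫ :=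
      integral_nonneg fun x => real_inner_self_nonneg
    refine nonneg_of_mul_nonneg_right ?_
      (mul_pos (unitSphereArea_pos (E := E)) (pow_pos hs (finrank ℝ E - 1)))
    rw [mul_assoc, ← h]
    exact mul_nonneg hs.le hE

lemma monotoneOn_sphereMean_sq (hf : IsSmoothHarmonic f R) :
    MonotoneOn (sphereMean fun x => f x ^ 2) (Icc 0 R) := by
  have hderiv {s : ℝ} (hs : s ∈ interior (Icc 0 R)) := by
    rw [interior_Icc] at hs
    exact hf.hasDerivAt_sphereMean_sq hs.1.ne'
  refine monotoneOn_of_deriv_nonneg (convex_Icc 0 R)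
    (continuous_sphereMean (hf.continuous.pow 2)).continuousOn
    (fun s hs => (hderiv hs).differentiableAt.differentiableWithinAt) fun s hs => ?_
  rw [(hderiv hs).deriv]
  rw [interior_Icc] at hs
  have := hf.sphereMean_mul_eulerDeriv_self_nonneg hs.1.le hs.2.le
  have := hs.1
  positivity

end IsSmoothHarmonic

end SmoothHarmonic

section SpectralGap

lemma dirDeriv_neg_of_parity {f : E → ℝ} (hf : ContDiff ℝ 1 f) {k : ℕ}
    (h : ∀ x, f (-x) = (-1) ^ (k + 1) * f x) (v x : E) :
    dirDeriv v f (-x) = (-1) ^ k * dirDeriv v f x := by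
  have hneg : -dirDeriv v f (-x) = dirDeriv v (fun y => (-1) ^ (k + 1) * f y) x := by
    rw [← dirDeriv_comp_neg]
    simp_rw [h]
  rw [dirDeriv_const_mul hf, pow_succ] at hneg
  linarith

variable [FiniteDimensional ℝ E] [MeasurableSpace E] [BorelSpace E] [Nontrivial E]

lemma setIntegral_ball_mono_of_sphereMean_le {F G : E → ℝ} (hF : Continuous F) (hG : Continuous G)
    {s : ℝ} (hs : 0 ≤ s) (h : ∀ t ∈ Icc 0 s, sphereMean F t ≤ sphereMean G t) :
    ∫ x in ball 0 s, F x ≤ ∫ x in ball 0 s, G x := by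
  have hcF := continuous_sphereMean hF
  have hcG := continuous_sphereMean hG
  rw [setIntegral_ball_eq_integral_sphereMean hF hs, setIntegral_ball_eq_integral_sphereMean hG hs]
  refine mul_le_mul_of_nonneg_left ?_ unitSphereArea_pos.le
  refine intervalIntegral.integral_mono_on hs (Continuous.intervalIntegrable (by fun_prop) _ _)
    (Continuous.intervalIntegrable (by fun_prop) _ _) fun t ht => ?_
  exact mul_le_mul_of_nonneg_left (h t ht) (pow_nonneg ht.1 _)

lemma sphereMean_inner_gradient_self {ι : Type*} [Fintype ι] (b : OrthonormalBasis ι ℝ E)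
    {f : E → ℝ} (hf : ContDiff ℝ 1 f) (s : ℝ) :
    sphereMean (fun x => ⟪∇ f x, ∇ f x⟫) s =
      ∑ i, sphereMean (fun x => dirDeriv (b i) f x ^ 2) s := by
  simp_rw [inner_gradient_gradient_eq_sum b, ← sq]
  exact sphereMean_sum (fun i => (continuous_dirDeriv hf (b i)).pow 2) s

namespace IsSmoothHarmonic

variable {f g : E → ℝ} {R s : ℝ}

lemma sphereMean_mul_eulerDeriv_le (hf : IsSmoothHarmonic f R) (hg : IsSmoothHarmonic g R)
    (h : ∀ v, ∀ t ∈ Icc 0 s, sphereMean (fun x => dirDeriv v f x ^ 2) t ≤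
      sphereMean (fun x => dirDeriv v g x ^ 2) t) (hs : 0 < s) (hsR : s ≤ R) :
    sphereMean (fun x => f x * eulerDeriv f x) s ≤
      sphereMean (fun x => g x * eulerDeriv g x) s := by
  have hf1 := hf.contDiff_of_le 1
  have hg1 := hg.contDiff_of_le 1
  have hgrad : ∫ x in ball 0 s, ⟪∇ f x, ∇ f x⟫ ≤ ∫ x in ball 0 s, ⟪∇ g x, ∇ g x⟫ := by
    refine setIntegral_ball_mono_of_sphereMean_le
      ((continuous_gradient hf1).inner (continuous_gradient hf1))
      ((continuous_gradient hg1).inner (continuous_gradient hg1)) hs.le fun t ht => ?_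
    rw [sphereMean_inner_gradient_self (stdOrthonormalBasis ℝ E) hf1,
      sphereMean_inner_gradient_self (stdOrthonormalBasis ℝ E) hg1]
    exact Finset.sum_le_sum fun i _ => h _ t ht
  have hflux := mul_le_mul_of_nonneg_left hgrad hs.le
  rw [hf.mul_setIntegral_ball_inner_gradient hf1 hs.le hsR,
    hg.mul_setIntegral_ball_inner_gradient hg1 hs.le hsR] at hflux
  exact le_of_mul_le_mul_left (le_of_mul_le_mul_left hflux unitSphereArea_pos) (pow_pos hs _)

theorem sphereMean_sq_le_of_dirDeriv (hf : IsSmoothHarmonic f R) (hg : IsSmoothHarmonic g R)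
    (h0 : f 0 ^ 2 ≤ g 0 ^ 2)
    (h : ∀ v, ∀ t ∈ Icc 0 R, sphereMean (fun x => dirDeriv v f x ^ 2) t ≤
      sphereMean (fun x => dirDeriv v g x ^ 2) t) (hs : s ∈ Icc 0 R) :
    sphereMean (fun x => f x ^ 2) s ≤ sphereMean (fun x => g x ^ 2) s := by
  have hcont : Continuous fun t =>
      sphereMean (fun x => g x ^ 2) t - sphereMean (fun x => f x ^ 2) t :=
    (continuous_sphereMean (hg.continuous.pow 2)).sub (continuous_sphereMean (hf.continuous.pow 2))
  have hderiv {t : ℝ} (ht : t ∈ interior (Icc 0 R)) := by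
    rw [interior_Icc] at ht
    exact (hg.hasDerivAt_sphereMean_sq ht.1.ne').fun_sub (hf.hasDerivAt_sphereMean_sq ht.1.ne')
  have hmono := monotoneOn_of_deriv_nonneg (convex_Icc 0 R) hcont.continuousOn
    (fun t ht => (hderiv ht).differentiableAt.differentiableWithinAt) fun t ht => by
      rw [(hderiv ht).deriv, sub_nonneg]
      rw [interior_Icc] at ht
      have hflux := hf.sphereMean_mul_eulerDeriv_le hg
        (fun v r hr => h v r ⟨hr.1, hr.2.trans ht.2.le⟩) ht.1 ht.2.le
      have := ht.1
      gcongr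
  have h0s := hmono (left_mem_Icc.2 (hs.1.trans hs.2)) hs hs.1
  simp only [sphereMean_zero_right] at h0s
  linarith

/-- The inductive step of the spectral gap: `∂_v (E f - a f) = E (∂_v f) - (a - 1) ∂_v f`, so
differentiation lowers the degree `a` by one. -/
lemma sphereMean_sq_le_eulerDeriv_sub (hf : IsSmoothHarmonic f R) (a : ℝ)
    (h0 : f 0 ^ 2 ≤ (a * f 0) ^ 2)
    (h : ∀ v, ∀ t ∈ Icc 0 R, sphereMean (fun x => dirDeriv v f x ^ 2) t ≤
      sphereMean (fun x => (eulerDeriv (dirDeriv v f) x -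
        (a - 1) * dirDeriv v f x) ^ 2) t) (hs : s ∈ Icc 0 R) :
    sphereMean (fun x => f x ^ 2) s ≤
      sphereMean (fun x => (eulerDeriv f x - a * f x) ^ 2) s := by
  refine hf.sphereMean_sq_le_of_dirDeriv (hf.eulerDeriv.sub_const_mul hf a)
    (by simpa [eulerDeriv] using h0) (fun v t ht => (h v t ht).trans_eq ?_) hs
  congr 1 with x
  rw [dirDeriv_sub_const_mul (hf.eulerDeriv.contDiff_of_le 1) (hf.contDiff_of_le 1),
    dirDeriv_eulerDeriv (hf.contDiff_of_le 2)]
  ring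

lemma sphereMean_sq_le_eulerDeriv_sq (hf : IsSmoothHarmonic f R) (h0 : f 0 = 0)
    (hs : s ∈ Icc 0 R) :
    sphereMean (fun x => f x ^ 2) s ≤ sphereMean (fun x => eulerDeriv f x ^ 2) s := by
  have h := hf.sphereMean_sq_le_eulerDeriv_sub 0 (by simp [h0]) (fun v t ht => ?_) hs
  · simpa using h
  have hv := hf.dirDeriv v
  have hc := hv.continuous
  have hec := hv.eulerDeriv.continuous
  have hexpand (x : E) :
      (eulerDeriv (dirDeriv v f) x - (0 - 1) * dirDeriv v f x) ^ 2 =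
        eulerDeriv (dirDeriv v f) x ^ 2 +
          2 * (dirDeriv v f x * eulerDeriv (dirDeriv v f) x) +
          dirDeriv v f x ^ 2 := by ring
  simp_rw [hexpand]
  rw [sphereMean_add (by fun_prop) (by fun_prop), sphereMean_add (by fun_prop) (by fun_prop),
    sphereMean_const_mul]
  have hflux := hv.sphereMean_mul_eulerDeriv_self_nonneg ht.1 ht.2
  have hsq : 0 ≤ sphereMean (fun x => eulerDeriv (dirDeriv v f) x ^ 2) t :=
    sphereMean_nonneg (fun x => sq_nonneg _) t
  linarith

/-- A harmonic function of parity opposite to that of `k` has no component of homogeneity `k`,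
so the spectral gap of the Euler field applies. Differentiation lowers the homogeneity by one and
flips the parity, which gives an induction on `k` without spherical harmonics. -/
theorem sphereMean_sq_le_eulerDeriv_sub_of_parity (k : ℕ) {f : E → ℝ} (hf : IsSmoothHarmonic f R)
    (hparity : ∀ x, f (-x) = (-1) ^ (k + 1) * f x) (hs : s ∈ Icc 0 R) :
    sphereMean (fun x => f x ^ 2) s ≤
      sphereMean (fun x => (eulerDeriv f x - k * f x) ^ 2) s := by
  induction k generalizing f s with
  | zero =>
    have h0 : f 0 = 0 := by
      have h := hparity 0
      rw [neg_zero, zero_add, pow_one] at h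
      linarith
    simpa using hf.sphereMean_sq_le_eulerDeriv_sq h0 hs
  | succ k ih =>
    refine hf.sphereMean_sq_le_eulerDeriv_sub _ ?_ (fun v t ht => ?_) hs
    · rw [mul_pow]
      refine le_mul_of_one_le_left (sq_nonneg _) (one_le_pow₀ ?_)
      exact_mod_cast Nat.le_add_left 1 k
    · simpa using ih (hf.dirDeriv v) (dirDeriv_neg_of_parity (hf.contDiff_of_le 1) hparity v) ht

end IsSmoothHarmonic

end SpectralGap

section Frequency

variable [MeasurableSpace E] [BorelSpace E] [FiniteDimensional ℝ E]

/-- Almgren's frequency of `f` on the sphere of radius `s` about the origin, with the Dirichlet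
energy of the ball written as a flux through the sphere by Green's identity. It is `0` when `f`
vanishes on the sphere. -/
def frequency (f : E → ℝ) (s : ℝ) : ℝ :=
  sphereMean (fun x => f x * eulerDeriv f x) s / sphereMean (fun x => f x ^ 2) s

/-- The mean square over the sphere of radius `s` of `E f - N f`, where `E` is the Euler field and
`N = frequency f s`. It vanishes when `f` is homogeneous. -/
def homogeneityDefect (f : E → ℝ) (s : ℝ) : ℝ :=
  sphereMean (fun x => (eulerDeriv f x - frequency f s * f x) ^ 2) s

lemma homogeneityDefect_nonneg (f : E → ℝ) (s : ℝ) : 0 ≤ homogeneityDefect f s :=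
  sphereMean_nonneg (fun _ => sq_nonneg _) s

variable [Nontrivial E] {f : E → ℝ} {R s : ℝ}

lemma homogeneityDefect_eq (hf : ContDiff ℝ 1 f) (h : sphereMean (fun x => f x ^ 2) s ≠ 0) :
    homogeneityDefect f s = sphereMean (fun x => eulerDeriv f x ^ 2) s -
      frequency f s ^ 2 * sphereMean (fun x => f x ^ 2) s := by
  have hc := hf.continuous
  have hec : Continuous (eulerDeriv f) := (contDiff_eulerDeriv (n := 0) hf).continuous
  have hflux : sphereMean (fun x => f x * eulerDeriv f x) s =
      frequency f s * sphereMean (fun x => f x ^ 2) s := by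
    rw [frequency, div_mul_cancel₀ _ h]
  have hexpand (x : E) : (eulerDeriv f x - frequency f s * f x) ^ 2 = eulerDeriv f x ^ 2 +
      (-2 * frequency f s) * (f x * eulerDeriv f x) + frequency f s ^ 2 * f x ^ 2 := by
    ring
  simp_rw [homogeneityDefect, hexpand]
  rw [sphereMean_add (by fun_prop) (by fun_prop), sphereMean_add (by fun_prop) (by fun_prop),
    sphereMean_const_mul, sphereMean_const_mul, hflux]
  ring

namespace IsSmoothHarmonic

lemma hasDerivAt_sphereMean_mul_eulerDeriv (hf : IsSmoothHarmonic f R) (hs : 0 < s)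
    (hsR : s ≤ R) :
    HasDerivAt (sphereMean fun x => f x * eulerDeriv f x)
      (2 * sphereMean (fun x => eulerDeriv f x ^ 2) s / s) s := by
  have hf1 := hf.contDiff_of_le 1
  have hef1 := hf.eulerDeriv.contDiff_of_le 1
  have hc := hf1.continuous
  have hec := hef1.continuous
  have heec := hf.eulerDeriv.eulerDeriv.continuous
  have hleibniz (x : E) : eulerDeriv (fun y => f y * eulerDeriv f y) x =
      f x * eulerDeriv (eulerDeriv f) x +
        eulerDeriv f x * eulerDeriv f x :=
    dirDeriv_mul hf1 hef1 x x
  refine (hasDerivAt_sphereMean (hf1.mul hef1) hs.ne').congr_deriv ?_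
  rw [funext hleibniz, sphereMean_add (by fun_prop) (by fun_prop),
    hf.sphereMean_mul_eulerDeriv_comm hf.eulerDeriv hs hsR, ← two_mul]
  simp_rw [sq]

theorem hasDerivAt_frequency (hf : IsSmoothHarmonic f R) (hs : 0 < s) (hsR : s ≤ R)
    (h : sphereMean (fun x => f x ^ 2) s ≠ 0) :
    HasDerivAt (frequency f)
      (2 / s * homogeneityDefect f s / sphereMean (fun x => f x ^ 2) s) s := by
  have hdiv : HasDerivAt (frequency f) _ s :=
    (hf.hasDerivAt_sphereMean_mul_eulerDeriv hs hsR).fun_div (hf.hasDerivAt_sphereMean_sq hs.ne') h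
  refine hdiv.congr_deriv ?_
  rw [homogeneityDefect_eq (hf.contDiff_of_le 1) h, frequency]
  field_simp

lemma sphereMean_sq_pos_of_le (hf : IsSmoothHarmonic f R) {a : ℝ} (ha : 0 ≤ a)
    (h : 0 < sphereMean (fun x => f x ^ 2) a) (hs : s ∈ Icc a R) :
    0 < sphereMean (fun x => f x ^ 2) s :=
  h.trans_le <|
    hf.monotoneOn_sphereMean_sq ⟨ha, hs.1.trans hs.2⟩ ⟨ha.trans hs.1, hs.2⟩ hs.1

theorem monotoneOn_frequency (hf : IsSmoothHarmonic f R) {a : ℝ} (ha : 0 < a)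
    (h : 0 < sphereMean (fun x => f x ^ 2) a) : MonotoneOn (frequency f) (Icc a R) := by
  have hderiv {s : ℝ} (hs : s ∈ Icc a R) := hf.hasDerivAt_frequency (ha.trans_le hs.1) hs.2
    (hf.sphereMean_sq_pos_of_le ha.le h hs).ne'
  refine monotoneOn_of_deriv_nonneg (convex_Icc a R)
    (fun s hs => (hderiv hs).continuousAt.continuousWithinAt)
    (fun s hs => (hderiv (interior_subset hs)).differentiableAt.differentiableWithinAt)
    fun s hs => ?_
  have hs' := interior_subset hs
  rw [(hderiv hs').deriv]
  have := hf.sphereMean_sq_pos_of_le ha.le h hs'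
  have := ha.trans_le hs'.1
  have := homogeneityDefect_nonneg f s
  positivity

lemma exists_homogeneityDefect_eq_slope (hf : IsSmoothHarmonic f R) {a b : ℝ} (ha : 0 < a)
    (hab : a < b) (hbR : b ≤ R) (h : 0 < sphereMean (fun x => f x ^ 2) a) :
    ∃ s ∈ Ioo a b, 2 * (b - a) * homogeneityDefect f s =
      s * sphereMean (fun x => f x ^ 2) s * (frequency f b - frequency f a) := by
  have hpos {s : ℝ} (hs : s ∈ Icc a b) := hf.sphereMean_sq_pos_of_le ha.le h ⟨hs.1, hs.2.trans hbR⟩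
  have hderiv {s : ℝ} (hs : s ∈ Icc a b) :=
    hf.hasDerivAt_frequency (ha.trans_le hs.1) (hs.2.trans hbR) (hpos hs).ne'
  obtain ⟨s, hs, hslope⟩ := exists_hasDerivAt_eq_slope (frequency f) _ hab
    (fun s hs => (hderiv hs).continuousAt.continuousWithinAt)
    (fun s hs => hderiv (Ioo_subset_Icc_self hs))
  refine ⟨s, hs, ?_⟩
  rw [div_eq_div_iff (hpos (Ioo_subset_Icc_self hs)).ne' (sub_pos.2 hab).ne'] at hslope
  have := (ha.trans hs.1).ne'
  field_simp at hslope
  linarith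

/-- Radii in this range are large enough for interior estimates at points of norm at most `r / 2`,
and small enough that the half sphere facing such a point `a` lies well inside `ball a r`. -/
lemma exists_homogeneityDefect_le (hf : IsSmoothHarmonic f R) {r : ℝ} (hr : 0 < r)
    (hrR : 3 * r / 2 ≤ R) (h : 0 < sphereMean (fun x => f x ^ 2) (r / 2)) :
    ∃ s ∈ Ioo (6 / 10 * r) (8 / 10 * r), homogeneityDefect f s ≤
      2 * sphereMean (fun x => f x ^ 2) s * (frequency f (3 * r / 2) - frequency f (r / 2)) := by
  have hr2 : 0 < r / 2 := half_pos hr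
  have hpos {s : ℝ} (hs : s ∈ Icc (6 / 10 * r) (8 / 10 * r)) :
      0 < sphereMean (fun x => f x ^ 2) s :=
    hf.sphereMean_sq_pos_of_le hr2.le h ⟨by linarith [hs.1], by linarith [hs.2]⟩
  obtain ⟨s, hs, hslope⟩ := hf.exists_homogeneityDefect_eq_slope (a := 6 / 10 * r)
    (b := 8 / 10 * r) (by linarith) (by linarith) (by linarith) (hpos ⟨le_rfl, by linarith⟩)
  refine ⟨s, hs, ?_⟩
  have hmono := hf.monotoneOn_frequency hr2 h
  have hleft : frequency f (r / 2) ≤ frequency f (6 / 10 * r) :=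
    hmono ⟨le_rfl, by linarith⟩ ⟨by linarith, by linarith⟩ (by linarith)
  have hright : frequency f (8 / 10 * r) ≤ frequency f (3 * r / 2) :=
    hmono ⟨by linarith, by linarith⟩ ⟨by linarith, hrR⟩ (by linarith)
  have hbound : s * sphereMean (fun x => f x ^ 2) s *
        (frequency f (8 / 10 * r) - frequency f (6 / 10 * r)) ≤
      8 / 10 * r * sphereMean (fun x => f x ^ 2) s *
        (frequency f (3 * r / 2) - frequency f (r / 2)) := by
    have := hpos (Ioo_subset_Icc_self hs)
    have := sub_nonneg.2 (hmono (a := 6 / 10 * r) (b := 8 / 10 * r) ⟨by linarith, by linarith⟩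
      ⟨by linarith, by linarith⟩ (by linarith))
    gcongr
    exact hs.2.le
  refine le_of_mul_le_mul_left (a := 2 * (8 / 10 * r - 6 / 10 * r)) ?_ (by linarith)
  rw [hslope]
  linarith

end IsSmoothHarmonic

end Frequency

section InteriorEstimates

variable [FiniteDimensional ℝ E] [MeasurableSpace E] [BorelSpace E]

lemma integrableOn_ball {F : E → ℝ} (hF : Continuous F) (p : E) (ρ : ℝ) :
    IntegrableOn F (ball p ρ) :=
  (hF.continuousOn.integrableOn_compact (isCompact_closedBall p ρ)).mono_set
    ball_subset_closedBall

lemma setIntegral_ball_eq_setIntegral_ball_zero (F : E → ℝ) (p : E) (ρ : ℝ) :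
    ∫ x in ball p ρ, F x = ∫ x in ball 0 ρ, F (p + x) := by
  rw [← (measurePreserving_add_left volume p).setIntegral_preimage_emb
    (measurableEmbedding_addLeft p), preimage_add_ball, sub_self]

lemma setAverage_ball_eq_setAverage_ball_zero (F : E → ℝ) (p : E) (ρ : ℝ) :
    ⨍ x in ball p ρ, F x = ⨍ x in ball 0 ρ, F (p + x) := by
  rw [setAverage_eq, setAverage_eq, Measure.addHaar_real_ball_center,
    setIntegral_ball_eq_setIntegral_ball_zero]

lemma volume_real_ball_pos (x : E) {r : ℝ} (hr : 0 < r) : 0 < volume.real (ball x r) :=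
  ENNReal.toReal_pos (measure_ball_pos volume x hr).ne' measure_ball_lt_top.ne

lemma setAverage_ball_le_pow_mul {F : E → ℝ} (hF : Continuous F) (hF0 : 0 ≤ F) {x y : E}
    {ρ r L : ℝ} (hρ : 0 < ρ) (hsub : ball x ρ ⊆ ball y r) (hL : r ≤ L * ρ) :
    ⨍ z in ball x ρ, F z ≤ L ^ finrank ℝ E * ⨍ z in ball y r, F z := by
  have hr : 0 < r := nonempty_ball.1 ⟨x, hsub (mem_ball_self hρ)⟩
  have hvolume {p : E} {t : ℝ} (ht : 0 < t) :
      volume.real (ball p t) = t ^ finrank ℝ E * volume.real (ball (0 : E) 1) := by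
    simp [measureReal_def, Measure.addHaar_ball_of_pos volume p ht, ht.le]
  have hmono : ∫ z in ball x ρ, F z ≤ ∫ z in ball y r, F z :=
    setIntegral_mono_set (integrableOn_ball hF y r) (Eventually.of_forall hF0) hsub.eventuallyLE
  have hnonneg : 0 ≤ ∫ z in ball y r, F z := integral_nonneg hF0
  have hratio : volume.real (ball y r) ≤ L ^ finrank ℝ E * volume.real (ball x ρ) := by
    rw [hvolume hρ, hvolume hr, ← mul_assoc, ← mul_pow]
    gcongr
  have hx := volume_real_ball_pos x hρ
  have hy := volume_real_ball_pos y hr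
  rw [setAverage_eq, setAverage_eq, smul_eq_mul, smul_eq_mul, inv_mul_le_iff₀ hx]
  calc ∫ z in ball x ρ, F z ≤ volume.real (ball y r) *
        ((volume.real (ball y r))⁻¹ * ∫ z in ball y r, F z) := by
        rwa [mul_inv_cancel_left₀ hy.ne']
    _ ≤ L ^ finrank ℝ E * volume.real (ball x ρ) *
        ((volume.real (ball y r))⁻¹ * ∫ z in ball y r, F z) := by gcongr
    _ = _ := by ring

variable [Nontrivial E]

namespace IsSmoothHarmonic

variable {f : E → ℝ} {R : ℝ}

lemma sq_le_setAverage_ball (hf : IsSmoothHarmonic f R) {x : E} {ρ : ℝ} (hρ : 0 < ρ)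
    (h : ‖x‖ + ρ ≤ R) : f x ^ 2 ≤ ⨍ y in ball x ρ, f y ^ 2 := by
  have hg := hf.comp_const_add h
  rw [setAverage_ball_eq_setAverage_ball_zero, setAverage_eq, smul_eq_mul,
    le_inv_mul_iff₀ (volume_real_ball_pos 0 hρ), ← smul_eq_mul, ← setIntegral_const]
  refine setIntegral_ball_mono_of_sphereMean_le (G := fun y => f (x + y) ^ 2) continuous_const
    (hg.continuous.pow 2) hρ.le fun t ht => ?_
  simpa using hg.monotoneOn_sphereMean_sq (left_mem_Icc.2 hρ.le) ht ht.1

lemma setAverage_ball_sq_le_sphereMean (hf : IsSmoothHarmonic f R) {s : ℝ} (hs : 0 < s)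
    (hsR : s ≤ R) : ⨍ y in ball 0 s, f y ^ 2 ≤ sphereMean (fun x => f x ^ 2) s := by
  rw [setAverage_eq, smul_eq_mul, inv_mul_le_iff₀ (volume_real_ball_pos 0 hs), ← smul_eq_mul,
    ← setIntegral_const]
  refine setIntegral_ball_mono_of_sphereMean_le (F := fun y => f y ^ 2) (hf.continuous.pow 2)
    continuous_const hs.le fun t ht => ?_
  simpa using hf.monotoneOn_sphereMean_sq ⟨ht.1, ht.2.trans hsR⟩ ⟨hs.le, hsR⟩ ht.2

lemma sq_le_pow_mul_sphereMean (hf : IsSmoothHarmonic f R) {x : E} {ρ s L : ℝ} (hρ : 0 < ρ)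
    (h : ‖x‖ + ρ ≤ s) (hsR : s ≤ R) (hL : s ≤ L * ρ) :
    f x ^ 2 ≤ L ^ finrank ℝ E * sphereMean (fun x => f x ^ 2) s := by
  have hs : 0 < s := by linarith [norm_nonneg x]
  have hL0 : 0 ≤ L := (pos_of_mul_pos_left (hs.trans_le hL) hρ.le).le
  calc f x ^ 2 ≤ ⨍ y in ball x ρ, f y ^ 2 := hf.sq_le_setAverage_ball hρ (h.trans hsR)
    _ ≤ L ^ finrank ℝ E * ⨍ y in ball 0 s, f y ^ 2 :=
      setAverage_ball_le_pow_mul (hf.continuous.pow 2) (fun _ => sq_nonneg _) hρ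
        (ball_subset_ball' (by rw [dist_zero_right]; linarith)) hL
    _ ≤ _ := by gcongr; exact hf.setAverage_ball_sq_le_sphereMean hs hsR

lemma sq_sub_le_pow_mul_setAverage_ball (hf : IsSmoothHarmonic f R) (c : ℝ) {a y : E} {ρ r L : ℝ}
    (hρ : 0 < ρ) (hy : dist y a + ρ ≤ r) (ha : ‖a‖ + r ≤ R) (hL : r ≤ L * ρ) :
    (f y - c) ^ 2 ≤ L ^ finrank ℝ E * ⨍ z in ball a r, (f z - c) ^ 2 := by
  have hsub : IsSmoothHarmonic (fun x => f x - c) R := by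
    simpa using hf.sub_const_mul (IsSmoothHarmonic.const 1 R) c
  have hya : ‖y‖ ≤ dist y a + ‖a‖ := by simpa [dist_eq_norm] using norm_add_le (y - a) a
  exact (hsub.sq_le_setAverage_ball hρ (by linarith)).trans <|
    setAverage_ball_le_pow_mul (hsub.continuous.pow 2) (fun _ => sq_nonneg _) hρ
      (ball_subset_ball' (by linarith)) hL

lemma eqOn_zero_of_sphereMean_sq_eq_zero (hf : IsSmoothHarmonic f R) {s : ℝ} (hs : 0 < s)
    (hsR : s ≤ R) (h : sphereMean (fun x => f x ^ 2) s = 0) : EqOn f 0 (closedBall 0 s) := by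
  have hball : EqOn f 0 (ball 0 s) := fun x hx => by
    have hd : 0 < s - ‖x‖ := sub_pos.2 (mem_ball_zero_iff.1 hx)
    have hle := hf.sq_le_pow_mul_sphereMean (L := s / (s - ‖x‖)) hd (by linarith) hsR
      (div_mul_cancel₀ _ hd.ne').ge
    rw [h, mul_zero] at hle
    exact pow_eq_zero_iff two_ne_zero |>.1 (hle.antisymm (sq_nonneg _))
  rw [← closure_ball _ hs.ne']
  exact hball.closure hf.continuous continuous_zero

end IsSmoothHarmonic

end InteriorEstimates

section OppositeParity

/-- Twice the component of `f` whose parity is opposite to that of `k`, the parity of the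
homogeneous polynomials of degree `k`. -/
def oppositeParityPart {V : Type*} [Neg V] (k : ℕ) (f : V → ℝ) (x : V) : ℝ :=
  f x - (-1) ^ k * f (-x)

lemma oppositeParityPart_neg {V : Type*} [InvolutiveNeg V] (k : ℕ) (f : V → ℝ) (x : V) :
    oppositeParityPart k f (-x) = (-1) ^ (k + 1) * oppositeParityPart k f x := by
  rcases k.even_or_odd with hk | hk <;>
    simp [oppositeParityPart, pow_succ, hk.neg_one_pow, add_comm]

lemma continuous_oppositeParityPart {V : Type*} [TopologicalSpace V] [Neg V] [ContinuousNeg V]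
    (k : ℕ) {f : V → ℝ} (hf : Continuous f) : Continuous (oppositeParityPart k f) :=
  hf.sub (continuous_const.mul (hf.comp continuous_neg))

protected lemma IsSmoothHarmonic.oppositeParityPart [FiniteDimensional ℝ E] {f : E → ℝ} {R : ℝ}
    (hf : IsSmoothHarmonic f R) (k : ℕ) : IsSmoothHarmonic (oppositeParityPart k f) R :=
  hf.sub_const_mul hf.comp_neg _

lemma eulerDeriv_oppositeParityPart_sub {f : E → ℝ} (hf : ContDiff ℝ 1 f) (k : ℕ) (c : ℝ) (x : E) :
    eulerDeriv (oppositeParityPart k f) x - c * oppositeParityPart k f x =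
      oppositeParityPart k (fun y => eulerDeriv f y - c * f y) x := by
  have hneg : ContDiff ℝ 1 fun y => f (-y) := hf.comp contDiff_neg
  have hsub : eulerDeriv (oppositeParityPart k f) x =
      eulerDeriv f x - (-1) ^ k * eulerDeriv f (-x) := by
    rw [← eulerDeriv_comp_neg]
    exact dirDeriv_sub_const_mul hf hneg _ x x
  rw [hsub]
  simp only [oppositeParityPart]
  ring

variable [FiniteDimensional ℝ E] [MeasurableSpace E] [BorelSpace E] [Nontrivial E]

lemma sphereMean_oppositeParityPart_sq_le {f : E → ℝ} (hf : Continuous f) (k : ℕ) (s : ℝ) :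
    sphereMean (fun x => oppositeParityPart k f x ^ 2) s ≤
      4 * sphereMean (fun x => f x ^ 2) s := by
  have hsign : ((-1 : ℝ) ^ k) ^ 2 = 1 := by rw [← pow_mul, mul_comm, pow_mul, neg_one_sq, one_pow]
  have hpointwise (x : E) : oppositeParityPart k f x ^ 2 ≤ 2 * f x ^ 2 + 2 * f (-x) ^ 2 := by
    simp only [oppositeParityPart]
    nlinarith [sq_nonneg (f x + (-1) ^ k * f (-x))]
  calc sphereMean (fun x => oppositeParityPart k f x ^ 2) s
      ≤ sphereMean (fun x => 2 * f x ^ 2 + 2 * f (-x) ^ 2) s :=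
        sphereMean_mono ((continuous_oppositeParityPart k hf).pow 2) (by fun_prop)
          fun x _ => hpointwise x
    _ = 4 * sphereMean (fun x => f x ^ 2) s := by
        rw [sphereMean_add (by fun_prop) (by fun_prop), sphereMean_const_mul, sphereMean_const_mul,
          sphereMean_comp_neg (fun x => f x ^ 2)]
        ring

-- On the half sphere `⟪y, a⟫ ≤ 0` the function `f` is, up to its part of opposite parity, a signed
-- reflection of itself.
lemma sphereMean_sq_le_of_half_sphere {f : E → ℝ} (hf : Continuous f) {a : E} {K s : ℝ}
    (hhalf : ∀ y, ‖y‖ = |s| → 0 ≤ ⟪y, a⟫ → f y ^ 2 ≤ K) (k : ℕ) :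
    sphereMean (fun x => f x ^ 2) s ≤
      2 * sphereMean (fun x => oppositeParityPart k f x ^ 2) s + 2 * K := by
  have hw := continuous_oppositeParityPart k hf
  have hpointwise (y : E) (hy : ‖y‖ = |s|) :
      f y ^ 2 ≤ 2 * oppositeParityPart k f y ^ 2 + 2 * K := by
    rcases le_total 0 ⟪y, a⟫ with hya | hya
    · have hle := hhalf y hy hya
      nlinarith [sq_nonneg (oppositeParityPart k f y), sq_nonneg (f y)]
    · have hle := hhalf (-y) (by rwa [norm_neg]) (by rwa [inner_neg_left, neg_nonneg])
      have hsign : ((-1 : ℝ) ^ k * f (-y)) ^ 2 = f (-y) ^ 2 := by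
        rw [mul_pow, ← pow_mul, mul_comm k, pow_mul, neg_one_sq, one_pow, one_mul]
      have hreflect : f y = oppositeParityPart k f y + (-1) ^ k * f (-y) := by
        rw [oppositeParityPart, sub_add_cancel]
      rw [hreflect]
      linarith [add_sq_le (a := oppositeParityPart k f y) (b := (-1) ^ k * f (-y))]
  calc sphereMean (fun x => f x ^ 2) s
      ≤ sphereMean (fun x => 2 * oppositeParityPart k f x ^ 2 + 2 * K) s :=
        sphereMean_mono (by fun_prop) (by fun_prop) hpointwise
    _ = 2 * sphereMean (fun x => oppositeParityPart k f x ^ 2) s + 2 * K := by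
        rw [sphereMean_add (by fun_prop) continuous_const, sphereMean_const_mul, sphereMean_const]

lemma sphereMean_sq_le_four_mul_of_spectral_gap {w : E → ℝ} (hw : ContDiff ℝ 1 w) {k N s : ℝ}
    (hk : |N - k| ≤ 1 / 2) (hgap : sphereMean (fun x => w x ^ 2) s ≤
      sphereMean (fun x => (eulerDeriv w x - k * w x) ^ 2) s) :
    sphereMean (fun x => w x ^ 2) s ≤
      4 * sphereMean (fun x => (eulerDeriv w x - N * w x) ^ 2) s := by
  have hc := hw.continuous
  have hec : Continuous (eulerDeriv w) := (contDiff_eulerDeriv (n := 0) hw).continuous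
  have hpointwise (x : E) : (eulerDeriv w x - k * w x) ^ 2 ≤
      2 * (eulerDeriv w x - N * w x) ^ 2 + 1 / 2 * w x ^ 2 := by
    have hk' : (N - k) ^ 2 ≤ 1 / 4 := by
      rw [← sq_abs]
      nlinarith [abs_nonneg (N - k)]
    nlinarith [sq_nonneg ((eulerDeriv w x - N * w x) - (N - k) * w x),
      mul_le_mul_of_nonneg_right hk' (sq_nonneg (w x))]
  have hmono : sphereMean (fun x => (eulerDeriv w x - k * w x) ^ 2) s ≤
      sphereMean (fun x => 2 * (eulerDeriv w x - N * w x) ^ 2 + 1 / 2 * w x ^ 2) s :=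
    sphereMean_mono (by fun_prop) (by fun_prop) fun x _ => hpointwise x
  rw [sphereMean_add (by fun_prop) (by fun_prop), sphereMean_const_mul, sphereMean_const_mul]
    at hmono
  linarith

protected lemma IsSmoothHarmonic.sphereMean_oppositeParityPart_sq_le {f : E → ℝ} {R s N : ℝ}
    (hf : IsSmoothHarmonic f R) (hs : s ∈ Icc 0 R) {k : ℕ} (hk : |N - k| ≤ 1 / 2) :
    sphereMean (fun x => oppositeParityPart k f x ^ 2) s ≤
      16 * sphereMean (fun x => (eulerDeriv f x - N * f x) ^ 2) s := by
  have hw := hf.oppositeParityPart k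
  have hgap := hw.sphereMean_sq_le_eulerDeriv_sub_of_parity k (oppositeParityPart_neg k f) hs
  have hdefect := sphereMean_oppositeParityPart_sq_le
    (f := fun y => eulerDeriv f y - N * f y)
    (hf.eulerDeriv.sub_const_mul hf N).continuous k s
  have hle := sphereMean_sq_le_four_mul_of_spectral_gap (hw.contDiff_of_le 1) hk hgap
  simp only [eulerDeriv_oppositeParityPart_sub (hf.contDiff_of_le 1)] at hle
  linarith

end OppositeParity

section CriticalPoint

variable [FiniteDimensional ℝ E] [MeasurableSpace E] [BorelSpace E] [Nontrivial E]

namespace IsSmoothHarmonic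

variable {f : E → ℝ} {R r s : ℝ}

lemma frequency_nonneg (hf : IsSmoothHarmonic f R) (hs : s ∈ Icc 0 R) : 0 ≤ frequency f s :=
  div_nonneg (hf.sphereMean_mul_eulerDeriv_self_nonneg hs.1 hs.2)
    (sphereMean_nonneg (fun _ => sq_nonneg _) s)

lemma one_half_le_frequency (hf : IsSmoothHarmonic f R) (h0 : f 0 = 0) (hs : s ∈ Icc 0 R)
    (hpos : 0 < sphereMean (fun x => f x ^ 2) s)
    (hdefect : homogeneityDefect f s ≤ 3 / 4 * sphereMean (fun x => f x ^ 2) s) :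
    1 / 2 ≤ frequency f s := by
  have hgap := hf.sphereMean_sq_le_eulerDeriv_sq h0 hs
  have hsplit := homogeneityDefect_eq (hf.contDiff_of_le 1) hpos.ne'
  have hsq : (1 / 2) ^ 2 ≤ frequency f s ^ 2 :=
    le_of_mul_le_mul_right (by linarith) hpos
  exact le_of_sq_le_sq hsq (hf.frequency_nonneg hs)

-- The constant `95 / 100` comes from `‖y - a‖² ≤ ‖y‖² + ‖a‖² ≤ (0.64 + 0.25) r²`.
lemma sq_le_of_inner_nonneg (hf : IsSmoothHarmonic f R) (hr : 0 < r) (hrR : 3 * r / 2 ≤ R)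
    {a y : E} (ha : ‖a‖ ≤ r / 2) (hy : ‖y‖ ≤ 8 / 10 * r) (hya : 0 ≤ ⟪y, a⟫) :
    f y ^ 2 ≤ 2 * (20 ^ finrank ℝ E * ⨍ z in ball a r, (f z - f a) ^ 2) + 2 * f a ^ 2 := by
  have hdist : dist y a ≤ 95 / 100 * r := by
    rw [dist_eq_norm]
    refine le_of_sq_le_sq ?_ (by positivity)
    rw [norm_sub_sq_real]
    nlinarith [norm_nonneg a, norm_nonneg y]
  have hdiff : (f y - f a) ^ 2 ≤ 20 ^ finrank ℝ E * ⨍ z in ball a r, (f z - f a) ^ 2 :=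
    hf.sq_sub_le_pow_mul_setAverage_ball (f a) (ρ := r / 20) (by positivity) (by linarith)
      (by linarith) (by linarith)
  nlinarith [sq_nonneg (f y - 2 * f a)]

protected lemma sphereMean_sq_le_of_half_sphere (hf : IsSmoothHarmonic f R) (hs : s ∈ Icc 0 R)
    {a : E} {K : ℝ} (hhalf : ∀ y, ‖y‖ = |s| → 0 ≤ ⟪y, a⟫ → f y ^ 2 ≤ K)
    (hdefect : homogeneityDefect f s ≤ 1 / 64 * sphereMean (fun x => f x ^ 2) s) :
    sphereMean (fun x => f x ^ 2) s ≤ 4 * K := by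
  have hk : |frequency f s - ⌊frequency f s + 1 / 2⌋₊| ≤ 1 / 2 := by
    have hN := hf.frequency_nonneg hs
    have hfloor := Nat.floor_le (show 0 ≤ frequency f s + 1 / 2 by linarith)
    have hfloor' := Nat.lt_floor_add_one (frequency f s + 1 / 2)
    exact abs_le.2 ⟨by linarith, by linarith⟩
  have hopposite := hf.sphereMean_oppositeParityPart_sq_le hs hk
  have hle := sphereMean_sq_le_of_half_sphere hf.continuous hhalf ⌊frequency f s + 1 / 2⌋₊
  rw [homogeneityDefect] at hdefect
  linarith

-- `E f - N f` is harmonic with mean square `homogeneityDefect f s`, and equals `-N f a` at `a`.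
lemma sq_frequency_mul_le_homogeneityDefect (hf : IsSmoothHarmonic f R) {a : E} {ρ L : ℝ}
    (hcrit : fderiv ℝ f a = 0) (hρ : 0 < ρ) (ha : ‖a‖ + ρ ≤ s) (hsR : s ≤ R) (hL : s ≤ L * ρ) :
    (frequency f s * f a) ^ 2 ≤ L ^ finrank ℝ E * homogeneityDefect f s := by
  have hle := (hf.eulerDeriv.sub_const_mul hf (frequency f s)).sq_le_pow_mul_sphereMean hρ ha hsR hL
  simpa [eulerDeriv, hcrit, homogeneityDefect] using hle

lemma sq_le_of_homogeneityDefect_le (hf : IsSmoothHarmonic f R) (h0 : f 0 = 0) (hr : 0 < r)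
    (hrR : 3 * r / 2 ≤ R) {a : E} (ha : ‖a‖ ≤ r / 2) (hcrit : fderiv ℝ f a = 0)
    (hs : s ∈ Ioo (6 / 10 * r) (8 / 10 * r)) (hpos : 0 < sphereMean (fun x => f x ^ 2) s) {W : ℝ}
    (hW0 : 0 ≤ W) (hW : W ≤ 1 / 128)
    (hdefect : homogeneityDefect f s ≤ 2 * sphereMean (fun x => f x ^ 2) s * W) :
    f a ^ 2 ≤ 8 * 8 ^ (finrank ℝ E + 1) * W *
      (f a ^ 2 + 20 ^ finrank ℝ E * ⨍ z in ball a r, (f z - f a) ^ 2) := by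
  obtain ⟨hs₁, hs₂⟩ := hs
  have hsR : s ∈ Icc 0 R := ⟨by linarith, by linarith⟩
  set h := sphereMean (fun x => f x ^ 2) s
  set K := 2 * (20 ^ finrank ℝ E * ⨍ z in ball a r, (f z - f a) ^ 2) + 2 * f a ^ 2
  have hhW : h * W ≤ h * (1 / 128) := by gcongr
  have hhK : h ≤ 4 * K := by
    refine hf.sphereMean_sq_le_of_half_sphere hsR (a := a) (fun y hy hya => ?_) (by linarith)
    rw [abs_of_nonneg hsR.1] at hy
    exact hf.sq_le_of_inner_nonneg hr hrR ha (hy.le.trans hs₂.le) hya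
  have hN := hf.one_half_le_frequency h0 hsR hpos (by linarith)
  have hvalue : (1 / 2 * f a) ^ 2 ≤ 8 ^ (finrank ℝ E + 1) * W * K := by
    calc (1 / 2 * f a) ^ 2 ≤ (frequency f s * f a) ^ 2 := by
          rw [mul_pow, mul_pow]
          gcongr
      _ ≤ 8 ^ finrank ℝ E * homogeneityDefect f s :=
          hf.sq_frequency_mul_le_homogeneityDefect (ρ := r / 10) hcrit (by positivity)
            (by linarith) hsR.2 (by linarith)
      _ ≤ 8 ^ finrank ℝ E * (2 * h * W) := by gcongr
      _ ≤ 8 ^ finrank ℝ E * (2 * (4 * K) * W) := by gcongr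
      _ = 8 ^ (finrank ℝ E + 1) * W * K := by ring
  linarith

lemma frequency_le_frequency (hf : IsSmoothHarmonic f R) {t : ℝ} (hs : 0 < s) (hst : s ≤ t)
    (htR : t ≤ R) : frequency f s ≤ frequency f t := by
  rcases (sphereMean_nonneg (fun x => sq_nonneg (f x)) s).eq_or_lt with hzero | hpos
  · rw [frequency, ← hzero, div_zero]
    exact hf.frequency_nonneg ⟨hs.le.trans hst, htR⟩
  · exact hf.monotoneOn_frequency hs hpos ⟨le_rfl, hst.trans htR⟩ ⟨hst, htR⟩ hst

theorem sq_le_setAverage_of_fderiv_eq_zero (hf : IsSmoothHarmonic f R) (h0 : f 0 = 0) (hr : 0 < r)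
    (hrR : 3 * r / 2 ≤ R) {a : E} (ha : ‖a‖ ≤ r / 2) (hcrit : fderiv ℝ f a = 0)
    (hW : frequency f (3 * r / 2) - frequency f (r / 2) ≤ 1 / (16 * 8 ^ (finrank ℝ E + 1))) :
    f a ^ 2 ≤ 16 * 8 ^ (finrank ℝ E + 1) * 20 ^ finrank ℝ E *
      (frequency f (3 * r / 2) - frequency f (r / 2)) * ⨍ z in ball a r, (f z - f a) ^ 2 := by
  have hA : 0 ≤ ⨍ z in ball a r, (f z - f a) ^ 2 := integral_nonneg fun z => sq_nonneg _
  have hW0 : 0 ≤ frequency f (3 * r / 2) - frequency f (r / 2) :=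
    sub_nonneg.2 (hf.frequency_le_frequency (by positivity) (by linarith) hrR)
  rcases (sphereMean_nonneg (fun x => sq_nonneg (f x)) (r / 2)).eq_or_lt with hzero | hpos
  · have hfa : f a = 0 := hf.eqOn_zero_of_sphereMean_sq_eq_zero (by positivity) (by linarith)
      hzero.symm (mem_closedBall_zero_iff.2 ha)
    rw [hfa, zero_pow two_ne_zero]
    rw [hfa] at hA
    exact mul_nonneg (mul_nonneg (by positivity) hW0) hA
  obtain ⟨s, hs, hdefect⟩ := hf.exists_homogeneityDefect_le hr hrR hpos
  have hpos_s := hf.sphereMean_sq_pos_of_le (s := s) (by positivity) hpos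
    ⟨by linarith [hs.1], by linarith [hs.2]⟩
  have hW' := (le_div_iff₀ (by positivity)).1 hW
  have hW128 : frequency f (3 * r / 2) - frequency f (r / 2) ≤ 1 / 128 := by
    refine hW.trans (one_div_le_one_div_of_le (by norm_num) ?_)
    linarith [pow_le_pow_right₀ (by norm_num : (1 : ℝ) ≤ 8) (Nat.le_add_left 1 (finrank ℝ E))]
  have hle := hf.sq_le_of_homogeneityDefect_le h0 hr hrR ha hcrit hs hpos_s hW0 hW128 hdefect
  -- The term `f a ^ 2` on the right of `hle` is absorbed on the left by the smallness of the drop.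
  linarith [mul_le_mul_of_nonneg_left hW' (sq_nonneg (f a))]

end IsSmoothHarmonic

end CriticalPoint

section Regularity

/-- An unnormalized smooth mollifier depending only on `‖y‖` and vanishing outside `ball 0 δ`. -/
def radialBump {V : Type*} [NormedAddCommGroup V] (δ : ℝ) (y : V) : ℝ :=
  Real.smoothTransition (1 - ‖y‖ ^ 2 / δ ^ 2)

lemma contDiff_radialBump (δ : ℝ) : ContDiff ℝ ∞ (radialBump (V := E) δ) :=
  Real.smoothTransition.contDiff.comp (contDiff_const.sub ((contDiff_norm_sq ℝ).div_const _))

lemma radialBump_eq_zero {V : Type*} [NormedAddCommGroup V] {δ : ℝ} (hδ : 0 < δ) {y : V}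
    (hy : δ ≤ ‖y‖) : radialBump δ y = 0 := by
  refine Real.smoothTransition.zero_of_nonpos (sub_nonpos.2 ?_)
  rw [one_le_div (by positivity)]
  gcongr

variable [FiniteDimensional ℝ E]

lemma exists_contDiff_eqOn_ball {n : ℕ∞} {u : E → ℝ} {c : E} {ρ R : ℝ}
    (hu : ContDiffOn ℝ n u (ball c R)) (hρ : 0 < ρ) (hρR : ρ < R) :
    ∃ v : E → ℝ, ContDiff ℝ n v ∧ EqOn v u (ball c ρ) := by
  let χ : ContDiffBump c := ⟨ρ, (ρ + R) / 2, hρ, by linarith⟩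
  refine ⟨fun x => χ x * u x, contDiff_iff_contDiffAt.2 fun x => ?_, fun x hx => ?_⟩
  · by_cases hx : x ∈ ball c R
    · exact χ.contDiff.contDiffAt.mul (hu.contDiffAt (isOpen_ball.mem_nhds hx))
    · have hfar : x ∈ (closedBall c ((ρ + R) / 2))ᶜ := fun h =>
        hx (closedBall_subset_ball (by linarith) h)
      refine (contDiffAt_const (c := (0 : ℝ))).congr_of_eventuallyEq ?_
      filter_upwards [isClosed_closedBall.isOpen_compl.mem_nhds hfar] with y hy
      rw [χ.zero_of_le_dist (not_le.1 (mt mem_closedBall.2 hy)).le, zero_mul]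
  · simp [χ.one_of_mem_closedBall (ball_subset_closedBall hx)]

lemma hasCompactSupport_radialBump {δ : ℝ} (hδ : 0 < δ) :
    HasCompactSupport (radialBump (V := E) δ) :=
  .intro (isCompact_closedBall 0 δ) fun _ hy =>
    radialBump_eq_zero hδ (not_le.1 (mem_closedBall_zero_iff.not.1 hy)).le

variable [MeasurableSpace E] [BorelSpace E]

lemma integral_radialBump_pos {δ : ℝ} (hδ : 0 < δ) : 0 < ∫ y : E, radialBump δ y :=
  (contDiff_radialBump δ).continuous.integral_pos_of_hasCompactSupport_nonneg_nonzero
    (hasCompactSupport_radialBump hδ) (fun _ => Real.smoothTransition.nonneg _) (x := 0)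
    (by simp [radialBump])

variable [Nontrivial E]

lemma integral_radialBump_mul {δ : ℝ} (hδ : 0 < δ) {g : E → ℝ} (hg : Continuous g) :
    ∫ y, radialBump δ y * g y = unitSphereArea E *
      ∫ t in (0 : ℝ)..δ, t ^ (finrank ℝ E - 1) *
        (Real.smoothTransition (1 - t ^ 2 / δ ^ 2) * sphereMean g t) := by
  have hsupport : ∀ y ∉ ball (0 : E) δ, radialBump δ y * g y = 0 := fun y hy => by
    rw [radialBump_eq_zero hδ (not_lt.1 (mem_ball_zero_iff.not.1 hy)), zero_mul]
  have hmean : ∀ t, sphereMean (fun y => radialBump δ y * g y) t =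
      Real.smoothTransition (1 - t ^ 2 / δ ^ 2) * sphereMean g t := fun t => by
    simp [sphereMean, radialBump, norm_smul, integral_const_mul]
  rw [← setIntegral_eq_integral_of_forall_compl_eq_zero hsupport,
    setIntegral_ball_eq_integral_sphereMean
      ((contDiff_radialBump δ).continuous.fun_mul hg) hδ.le]
  simp only [hmean]

lemma integral_radialBump_mul_of_sphereMean_eq {δ c : ℝ} (hδ : 0 < δ) {g : E → ℝ}
    (hg : Continuous g) (hc : ∀ t ∈ Icc 0 δ, sphereMean g t = c) :
    ∫ y, radialBump δ y * g y = (∫ y : E, radialBump δ y) * c := by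
  have hone := integral_radialBump_mul hδ (continuous_const (X := E) (y := (1 : ℝ)))
  simp only [mul_one, sphereMean_const] at hone
  rw [hone, integral_radialBump_mul hδ hg, mul_assoc, ← intervalIntegral.integral_mul_const]
  congr 1
  refine intervalIntegral.integral_congr fun t ht => ?_
  rw [uIcc_of_le hδ.le] at ht
  simp only [hc t ht, mul_assoc]

lemma sphereMean_eq_apply_zero {g : E → ℝ} {R s : ℝ} (hg : ContDiff ℝ 2 g)
    (hΔ : ∀ x ∈ ball 0 R, Δ g x = 0) (hs : 0 ≤ s) (hsR : s ≤ R) : sphereMean g s = g 0 := by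
  rw [← sphereMean_zero_right g]
  rcases hs.eq_or_lt with rfl | hs
  · rfl
  obtain ⟨t, ht, hslope⟩ := exists_hasDerivAt_eq_slope (sphereMean g) _ hs
    (continuous_sphereMean hg.continuous).continuousOn
    fun t ht => hasDerivAt_sphereMean (hg.of_le one_le_two) ht.1.ne'
  have hflux : sphereMean (eulerDeriv g) t = 0 := by
    have hgreen :=
      mul_setIntegral_ball_inner_gradient_add (contDiff_const (c := (1 : ℝ))) hg ht.1.le
    have hintegrand : ∀ x ∈ ball (0 : E) t,
        ⟪∇ (fun _ : E => (1 : ℝ)) x, ∇ g x⟫ + 1 * Δ g x = 0 := fun x hx => by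
      simp [hΔ x (ball_subset_ball (ht.2.le.trans hsR) hx)]
    rw [setIntegral_congr_fun measurableSet_ball hintegrand] at hgreen
    simpa [(unitSphereArea_pos (E := E)).ne', ht.1.ne'] using hgreen
  rw [hflux, zero_div, eq_comm, div_eq_zero_iff] at hslope
  rcases hslope with h | h <;> linarith

lemma integral_radialBump_mul_apply_sub {w : E → ℝ} {x : E} {δ : ℝ} (hw : ContDiff ℝ 2 w)
    (hδ : 0 < δ) (hΔ : ∀ y ∈ ball x δ, Δ w y = 0) :
    ∫ y, radialBump δ y * w (x - y) = (∫ y : E, radialBump δ y) * w x := by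
  have hw' : ContDiff ℝ 2 fun y => w (x + y) := hw.comp (contDiff_const.add contDiff_id)
  have hΔ' : ∀ y ∈ ball 0 δ, Δ (fun y => w (x + y)) y = 0 := fun y hy => by
    rw [laplacian_comp_const_add]
    exact hΔ _ (by simpa using hy)
  have hcont := hw.continuous
  refine integral_radialBump_mul_of_sphereMean_eq hδ (by fun_prop) fun t ht => ?_
  have hreflect := sphereMean_comp_neg (fun y => w (x + y)) t
  simp only [← sub_eq_add_neg] at hreflect
  rw [hreflect, sphereMean_eq_apply_zero hw' hΔ' ht.1 ht.2, add_zero]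

/-- By the mean value property, convolution with a normalized radial mollifier does not change a
harmonic function. -/
lemma exists_isSmoothHarmonic_eqOn_ball {u : E → ℝ} {ρ R : ℝ} (hu : ContDiffOn ℝ 2 u (ball 0 R))
    (hΔ : ∀ x ∈ ball 0 R, Δ u x = 0) (hρ : 0 < ρ) (hρR : ρ < R) :
    ∃ v : E → ℝ, IsSmoothHarmonic v ρ ∧ EqOn v u (ball 0 ρ) := by
  set δ := (R - ρ) / 2 with hδ_def
  have hδ : 0 < δ := by linarith
  obtain ⟨w, hw, hwu⟩ := exists_contDiff_eqOn_ball (n := 2) hu (ρ := ρ + δ) (by linarith)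
    (by linarith)
  have hlap : ∀ x ∈ ball 0 (ρ + δ), Δ w x = 0 := fun x hx => by
    rw [(InnerProductSpace.laplacian_congr_nhds
      (hwu.eventuallyEq_of_mem (isOpen_ball.mem_nhds hx))).eq_of_nhds]
    exact hΔ x (ball_subset_ball (by linarith) hx)
  let v : E → ℝ := fun x => (∫ y : E, radialBump δ y)⁻¹ * ∫ y, radialBump δ y * w (x - y)
  have hv : ContDiff ℝ ∞ v := contDiff_const.mul <|
    (hasCompactSupport_radialBump hδ).contDiff_convolution_left (ContinuousLinearMap.mul ℝ ℝ)
      (μ := volume) (contDiff_radialBump δ) hw.continuous.locallyIntegrable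
  have hvw : EqOn v w (ball 0 ρ) := fun x hx => by
    have hball : ball x δ ⊆ ball 0 (ρ + δ) := ball_subset_ball' (by
      linarith [mem_ball.1 hx])
    simp only [v, integral_radialBump_mul_apply_sub hw hδ fun y hy => hlap y (hball hy)]
    exact inv_mul_cancel_left₀ (integral_radialBump_pos hδ).ne' _
  have hsub : ball (0 : E) ρ ⊆ ball 0 (ρ + δ) := ball_subset_ball (by linarith)
  refine ⟨v, ⟨hv, fun x hx => ?_⟩, hvw.trans (hwu.mono hsub)⟩
  rw [(InnerProductSpace.laplacian_congr_nhds
    (hvw.eventuallyEq_of_mem (isOpen_ball.mem_nhds hx))).eq_of_nhds]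
  exact hlap x (hsub hx)

end Regularity

section Translation

variable {u v : E → ℝ} {p a : E} {c r R : ℝ}

lemma fderiv_eq_of_eq_comp_const_add (hvu : ∀ x ∈ ball 0 R, v x = u (p + x) - c)
    (ha : a ∈ ball 0 R) : fderiv ℝ v a = fderiv ℝ u (p + a) := by
  have hev : v =ᶠ[𝓝 a] fun x => u (p + x) - c := by
    filter_upwards [isOpen_ball.mem_nhds ha] with x hx using hvu x hx
  rw [hev.fderiv_eq, fderiv_sub_const, fderiv_comp_add_left]

variable [FiniteDimensional ℝ E] [MeasurableSpace E] [BorelSpace E]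

lemma setAverage_ball_sub_sq_eq_of_eq_comp_const_add (hvu : ∀ x ∈ ball 0 R, v x = u (p + x) - c)
    (hr : 0 < r) (ha : ‖a‖ + r ≤ R) :
    ⨍ z in ball a r, (v z - v a) ^ 2 = ⨍ z in ball (p + a) r, (u z - u (p + a)) ^ 2 := by
  rw [setAverage_ball_eq_setAverage_ball_zero, setAverage_ball_eq_setAverage_ball_zero _ (p + a)]
  refine setAverage_congr_fun measurableSet_ball (.of_forall fun z hz => ?_)
  have hz' : a + z ∈ ball 0 R := by
    rw [mem_ball_zero_iff] at hz ⊢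
    linarith [norm_add_le a z]
  simp only [hvu a (mem_ball_zero_iff.2 (by linarith)), hvu _ hz', add_assoc]
  ring

end Translation

section Euclidean

variable {n : ℕ} {u : ES n → ℝ} {s : Set (ES n)} {p : ES n}

namespace IsHarmonicOn

lemma laplacian_eq_zero (hu : IsHarmonicOn u s) (hs : IsOpen s) {x : ES n} (hx : x ∈ s) :
    Δ u x = 0 := by
  rw [InnerProductSpace.laplacian_eq_iteratedFDeriv_orthonormalBasis u
    (EuclideanSpace.basisFun (Fin n) ℝ), ← hu.2 x hx]
  simp [iteratedFDerivWithin_of_isOpen 2 hs hx, iteratedFDeriv_two_apply]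

lemma exists_isSmoothHarmonic_eq_comp_const_add [Nontrivial (ES n)] (hu : IsHarmonicOn u s)
    (hs : IsOpen s) {ρ : ℝ} (hρ : 0 < ρ) (hp : closedBall p ρ ⊆ s) :
    ∃ R > ρ, ∃ v, IsSmoothHarmonic v R ∧ ∀ x ∈ ball 0 R, v x = u (p + x) - u p := by
  obtain ⟨δ, hδ, hδs⟩ := (isCompact_closedBall p ρ).exists_thickening_subset_open hs hp
  rw [thickening_closedBall hδ hρ.le] at hδs
  have hmaps : MapsTo (p + ·) (ball 0 (δ + ρ)) s := fun x hx => hδs (by simpa using hx)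
  have hw : ContDiffOn ℝ 2 (fun x => u (p + x)) (ball 0 (δ + ρ)) := hu.1.comp (by fun_prop) hmaps
  have hΔ : ∀ x ∈ ball 0 (δ + ρ), Δ (fun x => u (p + x) - u p) x = 0 := fun x hx => by
    have hsub := (hw.contDiffAt (isOpen_ball.mem_nhds hx)).laplacian_sub
      (contDiffAt_const (c := u p))
    simpa [laplacian_comp_const_add, hu.laplacian_eq_zero hs (hmaps hx), Pi.sub_def] using hsub
  obtain ⟨v, hv, hvu⟩ := exists_isSmoothHarmonic_eqOn_ball (ρ := ρ + δ / 2)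
    (hw.sub contDiffOn_const) hΔ (by positivity) (by linarith)
  exact ⟨ρ + δ / 2, by linarith, v, hv, hvu⟩

end IsHarmonicOn

variable {v : ES n → ℝ} {r ρ R : ℝ}

lemma iN_eq_mul_frequency [Nontrivial (ES n)] (hv : IsSmoothHarmonic v R)
    (hvu : ∀ x ∈ ball 0 R, v x = u (p + x) - u p) (hρ : 0 < ρ) (hρR : ρ < R) :
    iN u p ρ = unitSphereArea (ES n) / sphereHausdorffArea (ES n) * frequency v ρ := by
  have hD : iD u p ρ = ∫ x in ball 0 ρ, ⟪∇ v x, ∇ v x⟫ := by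
    rw [iD, setIntegral_ball_eq_setIntegral_ball_zero]
    refine setIntegral_congr_fun measurableSet_ball fun x hx => ?_
    rw [real_inner_self_eq_norm_sq, gradient, gradient,
      fderiv_eq_of_eq_comp_const_add hvu (ball_subset_ball hρR.le hx)]
  have hH : iH u p ρ = sphereHausdorffArea (ES n) * ρ ^ (n - 1) *
      sphereMean (fun x => v x ^ 2) ρ := by
    have hcont : Continuous fun x => v (x - p) ^ 2 := by
      have := hv.continuous
      fun_prop
    have h := setIntegral_sphere_hausdorffMeasure hcont p hρ
    simp only [add_sub_cancel_left, finrank_euclideanSpace_fin] at h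
    rw [iH, ← h]
    refine setIntegral_congr_fun isClosed_sphere.measurableSet fun x hx => ?_
    have hx' : x - p ∈ ball 0 R := by
      rw [mem_sphere_iff_norm] at hx
      rwa [mem_ball_zero_iff, hx]
    simp only [hvu _ hx', add_sub_cancel]
  rw [iN, hD, hv.mul_setIntegral_ball_inner_gradient (hv.contDiff_of_le 1) hρ.le hρR.le, hH,
    finrank_euclideanSpace_fin, frequency]
  have := pow_pos hρ (n - 1)
  field_simp

lemma frequency_sub_eq_mul_iW [Nontrivial (ES n)] (hv : IsSmoothHarmonic v R)
    (hvu : ∀ x ∈ ball 0 R, v x = u (p + x) - u p) (hr : 0 < r) (hrR : 3 * r / 2 < R) :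
    frequency v (3 * r / 2) - frequency v (r / 2) =
      sphereHausdorffArea (ES n) / unitSphereArea (ES n) * iW u p r := by
  have hS := unitSphereArea_pos (E := ES n)
  have hH := sphereHausdorffArea_pos (E := ES n)
  rw [iW, iN_eq_mul_frequency hv hvu (by positivity) hrR,
    iN_eq_mul_frequency hv hvu (by positivity) (by linarith)]
  field_simp

theorem IsHarmonicOn.sq_sub_le_of_gradient_eq_zero [Nontrivial (ES n)] (hu : IsHarmonicOn u s)
    (hs : IsOpen s) (hr : 0 < r) {x : ES n} (hp : closedBall p (3 * r / 2) ⊆ s)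
    (hx : dist x p ≤ r / 2) (hgrad : ∇ u x = 0)
    (hW : sphereHausdorffArea (ES n) / unitSphereArea (ES n) * iW u p r ≤
      1 / (16 * 8 ^ (n + 1))) :
    (u x - u p) ^ 2 ≤ 16 * 8 ^ (n + 1) * 20 ^ n *
      (sphereHausdorffArea (ES n) / unitSphereArea (ES n) * iW u p r) *
        ⨍ z in ball x r, (u z - u x) ^ 2 := by
  obtain ⟨R, hrR, v, hv, hvu⟩ :=
    hu.exists_isSmoothHarmonic_eq_comp_const_add hs (by positivity) hp
  rw [dist_eq_norm] at hx
  have hmem : x - p ∈ ball 0 R := mem_ball_zero_iff.2 (by linarith)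
  have h0 : v 0 = 0 := by simp [hvu 0 (mem_ball_self (by linarith))]
  have hcrit : fderiv ℝ v (x - p) = 0 := by
    rw [fderiv_eq_of_eq_comp_const_add hvu hmem, add_sub_cancel]
    simpa [gradient] using hgrad
  have hval : v (x - p) = u x - u p := by rw [hvu _ hmem, add_sub_cancel]
  have havg := setAverage_ball_sub_sq_eq_of_eq_comp_const_add hvu hr (a := x - p) (by linarith)
  rw [add_sub_cancel] at havg
  rw [← frequency_sub_eq_mul_iW hv hvu hr hrR] at hW ⊢
  rw [← hval, ← havg]
  simpa only [finrank_euclideanSpace_fin] using hv.sq_le_setAverage_of_fderiv_eq_zero h0 hr hrR.le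
    hx hcrit (by rwa [finrank_euclideanSpace_fin])

end Euclidean

theorem value_variation_at_critical_point_general (n : ℕ) :
    ∃ C ε : ℝ, 0 < C ∧ 0 < ε ∧
      ∀ (u : ES n → ℝ) (s : Set (ES n)), IsOpen s → IsHarmonicOn u s →
        ∀ r : ℝ, 0 < r →
          ∀ X₁ X₂ : ES n, closedBall X₂ (3 * r / 2) ⊆ s → dist X₁ X₂ ≤ r / 2 → iW u X₂ r ≤ ε →
            gradient u X₁ = 0 →
            |u X₁ - u X₂| ≤
              C * Real.sqrt (iW u X₂ r) * Real.sqrt (⨍ z in ball X₁ r, (u z - u X₁) ^ 2) := by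
  rcases subsingleton_or_nontrivial (ES n) with _ | _
  · refine ⟨1, 1, one_pos, one_pos, fun u s _ _ r _ X₁ X₂ _ _ _ _ => ?_⟩
    rw [Subsingleton.elim X₁ X₂, sub_self, abs_zero]
    positivity
  let c := sphereHausdorffArea (ES n) / unitSphereArea (ES n)
  let K : ℝ := 16 * 8 ^ (n + 1) * 20 ^ n
  have hc : 0 < c := div_pos sphereHausdorffArea_pos unitSphereArea_pos
  refine ⟨√(K * c), 1 / (16 * 8 ^ (n + 1)) / c, by positivity, by positivity,
    fun u s hs hu r hr X₁ X₂ hball hdist hW hgrad => ?_⟩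
  have hsq := hu.sq_sub_le_of_gradient_eq_zero hs hr hball hdist hgrad ((le_div_iff₀' hc).1 hW)
  have havg : 0 ≤ ⨍ z in ball X₁ r, (u z - u X₁) ^ 2 := integral_nonneg fun z => sq_nonneg _
  rw [← Real.sqrt_mul (by positivity), ← Real.sqrt_mul' _ havg]
  exact Real.abs_le_sqrt (hsq.trans_eq (by ring))

/-- Lemma A.1(ii): variation of the value of `u` near a critical point.
Let `u` be a nonconstant harmonic function in `B_3(0) ⊆ ℝ^n` with `N(0,3) ≤ Λ`,
`0 < r < 1`, `X₁, X₂ ∈ B_1(0)` with `|X₁ - X₂| ≤ r/2` and `W(X₁,r), W(X₂,r)` small.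
If moreover `∇u(X₁) = 0` then
`|u(X₁) - u(X₂)| ≤ C (W(X₁,r)^{1/2} + W(X₂,r)^{1/2}) (⨍_{B_r(X₁)} |u - u(X₁)|²)^{1/2}`,
with `C = C(n, Λ)`. -/
theorem value_variation_at_critical_point (n : ℕ) (Λ : ℝ) (hΛ : 0 < Λ) :
    ∃ C ε : ℝ, 0 < C ∧ 0 < ε ∧
      ∀ u : ES n → ℝ, IsHarmonicOn u (ball 0 3) →
        (¬ ∀ x ∈ ball (0 : ES n) 3, u x = u 0) →
        iN u 0 3 ≤ Λ →
        ∀ r : ℝ, 0 < r → r < 1 →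
          ∀ X₁ X₂ : ES n, X₁ ∈ ball (0 : ES n) 1 → X₂ ∈ ball (0 : ES n) 1 →
            dist X₁ X₂ ≤ r / 2 → iW u X₁ r ≤ ε → iW u X₂ r ≤ ε →
            gradient u X₁ = 0 →
            |u X₁ - u X₂| ≤
              C * (Real.sqrt (iW u X₁ r) + Real.sqrt (iW u X₂ r)) *
                Real.sqrt (⨍ z in ball X₁ r, (u z - u X₁) ^ 2) := by
  obtain ⟨C, ε, hC, hε, hbound⟩ := value_variation_at_critical_point_general n
  refine ⟨C, ε, hC, hε, fun u hu _ _ r hr hr1 X₁ X₂ _ hX₂ hdist _ hW hgrad => ?_⟩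
  have hball : closedBall X₂ (3 * r / 2) ⊆ ball 0 3 :=
    closedBall_subset_ball' (by linarith [mem_ball.1 hX₂])
  refine (hbound u _ isOpen_ball hu r hr X₁ X₂ hball hdist hW hgrad).trans ?_
  gcongr
  exact le_add_of_nonneg_left (Real.sqrt_nonneg _)
end
end
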